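/- arXiv:1212.5832 — 3 statements merged into one kernel-verified Lean document; each statement's English description precedes it below -/
import Mathlib

section
/- (Proposition 1) Let Q be an affine quiver, k a field, and X a finite-dimensional representation of Q over k. Then the following are equivalent: (i) every indecomposable direct summand Z of X satisfies ∂(dim Z) = 0 (i.e., X is a regular representation); (ii) ∂(dim X) = 0 and ∂(dim Y) ≤ 0 for every subrepresentation Y ⊆ X. -/
open scoped BigOperators

/-- A finite quiver: finite sets of vertices and arrows with source and target maps. -/
structure FinQuiver where
  V : Type
  A : Type
  [fintypeV : Fintype V]
  [fintypeA : Fintype A]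
  [decEqV : DecidableEq V]
  src : A → V
  tgt : A → V

attribute [instance] FinQuiver.fintypeV FinQuiver.fintypeA FinQuiver.decEqV

namespace FinQuiver

variable (Q : FinQuiver)

/-- The Euler form of a finite quiver. -/
def eulerForm (x y : Q.V → ℤ) : ℤ :=
  (∑ i : Q.V, x i * y i) - ∑ a : Q.A, x (Q.src a) * y (Q.tgt a)

/-- The Tits form of a finite quiver. -/
def titsForm (x : Q.V → ℤ) : ℤ := Q.eulerForm x x

/-- The quiver has no loops. -/
def NoLoops : Prop := ∀ a : Q.A, Q.src a ≠ Q.tgt a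

/-- The underlying (simple) graph of a quiver without loops. -/
def graph : SimpleGraph Q.V where
  Adj i j := i ≠ j ∧ ∃ a : Q.A, (Q.src a = i ∧ Q.tgt a = j) ∨ (Q.src a = j ∧ Q.tgt a = i)
  symm := by
    constructor
    rintro i j ⟨hij, a, h⟩
    exact ⟨hij.symm, a, h.symm⟩
  loopless := by
    constructor
    rintro i ⟨hii, -⟩
    exact hii rfl

/-- The quiver has no oriented cycles. -/
def Acyclic : Prop :=
  ¬ ∃ (n : ℕ) (g : Fin (n + 1) → Q.A), ∀ k, Q.tgt (g k) = Q.src (g (k + 1))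

/-- The double quiver: for each arrow `a : i → j` add a reverse arrow `a* : j → i`. -/
def double : FinQuiver where
  V := Q.V
  A := Q.A ⊕ Q.A
  src := Sum.elim Q.src Q.tgt
  tgt := Sum.elim Q.tgt Q.src

/-- Positive roots: nonzero, nonnegative integer vectors with Tits form at most 1. -/
def PosRoot (x : Q.V → ℤ) : Prop := (∀ i, 0 ≤ x i) ∧ x ≠ 0 ∧ Q.titsForm x ≤ 1

end FinQuiver

/-- An affine quiver: connected, no loops, no oriented cycles, Tits form positive
semidefinite but not positive definite; `δ` is the minimal positive imaginary root,
generating the radical of the symmetrized Euler form. -/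
structure AffineQuiver extends FinQuiver where
  noLoops : toFinQuiver.NoLoops
  connected : toFinQuiver.graph.Connected
  acyclic : toFinQuiver.Acyclic
  posSemidef : ∀ x : V → ℤ, 0 ≤ toFinQuiver.titsForm x
  notPosDef : ∃ x : V → ℤ, x ≠ 0 ∧ toFinQuiver.titsForm x = 0
  δ : V → ℤ
  delta_pos : ∀ i, 0 < δ i
  radical_iff : ∀ x : V → ℤ,
    (∀ y : V → ℤ, toFinQuiver.eulerForm x y + toFinQuiver.eulerForm y x = 0) ↔
      ∃ m : ℤ, x = m • δ

/-- The defect `∂(x) = e(δ, x)`. -/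
def AffineQuiver.defect (Q : AffineQuiver) (x : Q.V → ℤ) : ℤ :=
  Q.eulerForm Q.δ x

/-- A finite-dimensional representation of a finite quiver over a field `k`. -/
structure QRep (Q : FinQuiver) (k : Type) [Field k] where
  carrier : Q.V → Type
  [acgI : ∀ i, AddCommGroup (carrier i)]
  [modI : ∀ i, Module k (carrier i)]
  [fdI : ∀ i, FiniteDimensional k (carrier i)]
  map : ∀ a : Q.A, carrier (Q.src a) →ₗ[k] carrier (Q.tgt a)

attribute [instance] QRep.acgI QRep.modI QRep.fdI

namespace QRep

variable {Q : FinQuiver} {k : Type} [Field k]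

/-- The dimension vector of a representation. -/
noncomputable def dimVec (X : QRep Q k) : Q.V → ℤ :=
  fun i => (Module.finrank k (X.carrier i) : ℤ)

end QRep

/-- A subrepresentation: a family of subspaces stable under all the arrow maps. -/
structure SubRep {Q : FinQuiver} {k : Type} [Field k] (X : QRep Q k) where
  mod : ∀ i, Submodule k (X.carrier i)
  stable : ∀ a : Q.A, ∀ x ∈ mod (Q.src a), X.map a x ∈ mod (Q.tgt a)

namespace SubRep

variable {Q : FinQuiver} {k : Type} [Field k] {X : QRep Q k}

/-- The dimension vector of a subrepresentation. -/
noncomputable def dimVec (U : SubRep X) : Q.V → ℤ :=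
  fun i => (Module.finrank k (U.mod i) : ℤ)

/-- The representation carried by a subrepresentation. -/
def toRep (U : SubRep X) : QRep Q k where
  carrier i := U.mod i
  map a := (X.map a).restrict (U.stable a)

end SubRep

namespace QRep

variable {Q : FinQuiver} {k : Type} [Field k]

/-- The quotient representation by a subrepresentation. -/
def quotBy (X : QRep Q k) (U : SubRep X) : QRep Q k where
  carrier i := X.carrier i ⧸ U.mod i
  map a := Submodule.mapQ _ _ (X.map a) (fun x hx => U.stable a x hx)

/-- A representation is indecomposable if it is nonzero and is not the internal direct
sum of two nonzero subrepresentations. -/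
def Indecomposable (X : QRep Q k) : Prop :=
  (∃ i, 0 < Module.finrank k (X.carrier i)) ∧
    ∀ U W : SubRep X, (∀ i, IsCompl (U.mod i) (W.mod i)) →
      (∀ i, U.mod i = ⊥) ∨ (∀ i, W.mod i = ⊥)

end QRep

/-- An isomorphism of representations of a quiver. -/
structure RepIso {Q : FinQuiver} {k : Type} [Field k] (X Y : QRep Q k) where
  equiv : ∀ i, X.carrier i ≃ₗ[k] Y.carrier i
  comm : ∀ (a : Q.A) (x : X.carrier (Q.src a)),
    equiv (Q.tgt a) (X.map a x) = Y.map a (equiv (Q.src a) x)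

section Preprojective

variable {Q : FinQuiver} {k : Type} [Field k]

/-- The endomorphism of `⊕ᵢ Xᵢ` induced by the map attached to a single arrow. -/
def arrowEnd (X : QRep Q k) (a : Q.A) :
    (∀ i, X.carrier i) →ₗ[k] (∀ i, X.carrier i) :=
  (LinearMap.single k X.carrier (Q.tgt a)).comp
    ((X.map a).comp (LinearMap.proj (Q.src a)))

/-- The preprojective relation for a representation of the double quiver:
at every vertex, `∑_{t(a)=i} X_a ∘ X_{a*} − ∑_{s(a)=i} X_{a*} ∘ X_a = 0`.
(Stated as one equation of endomorphisms of `⊕ᵢ Xᵢ`, which is equivalent since the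
`i`-component of the equation is exactly the relation at the vertex `i`.) -/
def PreprojRel (Q : FinQuiver) {k : Type} [Field k] (X : QRep Q.double k) : Prop :=
  (∑ a : Q.A, (arrowEnd X (Sum.inl a)).comp (arrowEnd X (Sum.inr a)))
    = ∑ a : Q.A, (arrowEnd X (Sum.inr a)).comp (arrowEnd X (Sum.inl a))

/-- Forget the reverse arrows: a representation of `Π_Q` gives a representation of `Q`. -/
def rho (X : QRep Q.double k) : QRep Q k where
  carrier := X.carrier
  acgI := X.acgI
  modI := X.modI
  fdI := X.fdI
  map a := X.map (Sum.inl a)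

/-- A subrepresentation of a `Π_Q`-representation is in particular a subrepresentation of
the underlying `Q`-representation. -/
def rhoSub {X : QRep Q.double k} (U : SubRep X) : SubRep (rho X) where
  mod := U.mod
  stable a x hx := U.stable (Sum.inl a) x hx

/-- A representation of the double quiver is ρ-fixed if all reverse arrows act as zero. -/
def RhoFixed (X : QRep Q.double k) : Prop :=
  ∀ a : Q.A, X.map (Sum.inr a) = 0

/-- Extend a representation of `Q` to the double quiver by letting all reverse arrows
act as zero. -/
def extendZero (P : QRep Q k) : QRep Q.double k where
  carrier := P.carrier
  acgI := P.acgI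
  modI := P.modI
  fdI := P.fdI
  map b := match b with
    | Sum.inl a => P.map a
    | Sum.inr _ => 0

end Preprojective

section SubQuot

variable {Q : FinQuiver} {k : Type} [Field k]

/-- The subquotient representation `W / U` attached to nested subrepresentations
`U ≤ W` of `Z`. -/
def subQuot (Z : QRep Q k) (U W : SubRep Z) (h : ∀ i, U.mod i ≤ W.mod i) : QRep Q k where
  carrier i := ↥(W.mod i) ⧸ (U.mod i).comap (W.mod i).subtype
  map a := Submodule.mapQ _ _ (W.toRep.map a)
    (fun x hx => U.stable a x.1 hx)

end SubQuot


section Helpers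

variable {Q : FinQuiver} {k : Type} [Field k]

/-- The (dual) preprojective relation for a family `ξ a : Y_{t a} → Z_{s a}`; such families
form the dual of `Ext¹(Z, Y)`. -/
def PRel (Y Z : QRep Q k) (ξ : ∀ a, Y.carrier (Q.tgt a) →ₗ[k] Z.carrier (Q.src a)) : Prop :=
  ∀ (y : ∀ i, Y.carrier i) (i : Q.V),
    ∑ a : Q.A, (Pi.single (Q.src a) (ξ a (Y.map a (y (Q.src a)))) : ∀ j, Z.carrier j) i =
    ∑ a : Q.A, (Pi.single (Q.tgt a) (Z.map a (ξ a (y (Q.tgt a)))) : ∀ j, Z.carrier j) i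

lemma dual_rank_one {Y Z : Type} [AddCommGroup Y] [AddCommGroup Z] [Module k Y] [Module k Z]
    [FiniteDimensional k Y] [FiniteDimensional k Z] (l : (Z →ₗ[k] Y) →ₗ[k] k) :
    ∃ ξ : Y →ₗ[k] Z, ∀ (f : Z →ₗ[k] k) (y : Y), f (ξ y) = l (f.smulRight y) := by
  let m : Y →ₗ[k] Module.Dual k (Module.Dual k Z) :=
    LinearMap.mk₂ k (fun y f => l (LinearMap.smulRight f y))
      (by intro a b f; rw [← map_add]; congr 1; ext z; simp)
      (by intro c a f; rw [← map_smul]; congr 1; ext z; exact smul_comm _ _ _)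
      (by intro a f g; rw [← map_add]; congr 1; ext z; exact add_smul _ _ _)
      (by intro c a f; rw [← map_smul]; congr 1; ext z; exact mul_smul _ _ _)
  refine ⟨(Module.evalEquiv k Z).symm.toLinearMap.comp m, fun f y => ?_⟩
  have h : (Module.evalEquiv k Z) ((Module.evalEquiv k Z).symm (m y)) = m y := by simp
  have := LinearMap.congr_fun h f
  simpa [m] using this

lemma eq_zero_of_rank_one {Y Z : Type} [AddCommGroup Y] [AddCommGroup Z] [Module k Y] [Module k Z]
    [FiniteDimensional k Y] [FiniteDimensional k Z] (l : (Z →ₗ[k] Y) →ₗ[k] k)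
    (h : ∀ (f : Z →ₗ[k] k) (y : Y), l (f.smulRight y) = 0) : l = 0 := by
  ext g
  let b := Module.finBasis k Z
  have hg : g = ∑ i, (b.coord i).smulRight (g (b i)) := by
    refine b.ext fun j => ?_
    simp [Finsupp.single_apply]
  rw [hg, map_sum]
  simp [h]

lemma ext_zero (Y Z : QRep Q k)
    (hξ : ∀ ξ : ∀ a, Y.carrier (Q.tgt a) →ₗ[k] Z.carrier (Q.src a), PRel Y Z ξ → ∀ a, ξ a = 0)
    (φ : ∀ a, Z.carrier (Q.src a) →ₗ[k] Y.carrier (Q.tgt a)) :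
    ∃ h : ∀ i, Z.carrier i →ₗ[k] Y.carrier i, ∀ a,
      (Y.map a).comp (h (Q.src a)) - (h (Q.tgt a)).comp (Z.map a) = φ a := by
  classical
  let Φ : (∀ i, Z.carrier i →ₗ[k] Y.carrier i) →ₗ[k]
      (∀ a, Z.carrier (Q.src a) →ₗ[k] Y.carrier (Q.tgt a)) :=
    { toFun := fun h a => (Y.map a).comp (h (Q.src a)) - (h (Q.tgt a)).comp (Z.map a)
      map_add' := by intro x y; ext a z; simp; abel
      map_smul' := by intro c x; ext a z; simp [smul_sub] }
  suffices hs : LinearMap.range Φ = ⊤ by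
    obtain ⟨h, hh⟩ := LinearMap.range_eq_top.mp hs φ
    exact ⟨h, fun a => congrFun hh a⟩
  by_contra hne
  obtain ⟨l, hl0, hl⟩ := Submodule.exists_le_ker_of_lt_top _ (lt_top_iff_ne_top.mpr hne)
  let la : ∀ a, (Z.carrier (Q.src a) →ₗ[k] Y.carrier (Q.tgt a)) →ₗ[k] k := fun a =>
    l.comp (LinearMap.single k (fun a => (Z.carrier (Q.src a) →ₗ[k] Y.carrier (Q.tgt a))) a)
  have hsum : ∀ ψ, l ψ = ∑ a, la a (ψ a) := by
    intro ψ
    conv_lhs => rw [← Finset.univ_sum_single ψ, map_sum]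
    rfl
  choose ξ hx using fun a => dual_rank_one (la a)
  have hrel : PRel Y Z ξ := by
    intro y i
    rw [← sub_eq_zero]
    refine (Module.forall_dual_apply_eq_zero_iff k _).mp fun f => ?_
    let h : ∀ i, Z.carrier i →ₗ[k] Y.carrier i := Pi.single i (LinearMap.smulRight f (y i))
    have h0 : l (Φ h) = 0 := hl ⟨h, rfl⟩
    rw [hsum] at h0
    rw [map_sub, map_sum, map_sum, ← Finset.sum_sub_distrib, ← h0]
    refine Finset.sum_congr rfl fun a _ => ?_
    have e : Φ h a = (Y.map a).comp (h (Q.src a)) - (h (Q.tgt a)).comp (Z.map a) := rfl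
    rw [e, map_sub]
    congr 1
    · by_cases hi : Q.src a = i
      · subst hi
        simp only [h, Pi.single_eq_same, hx]
        congr 1
        ext z; simp
      · simp only [h]
        rw [Pi.single_eq_of_ne hi, Pi.single_eq_of_ne (Ne.symm hi)]
        simp
    · by_cases hi : Q.tgt a = i
      · subst hi
        simp only [h, Pi.single_eq_same]
        exact hx a (f.comp (Z.map a)) (y (Q.tgt a))
      · simp only [h]
        rw [Pi.single_eq_of_ne hi, Pi.single_eq_of_ne (Ne.symm hi)]
        simp
  have hz := hξ ξ hrel
  apply hl0
  refine LinearMap.ext fun ψ => ?_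
  rw [hsum]
  refine Finset.sum_eq_zero fun a _ => ?_
  rw [eq_zero_of_rank_one (la a) (fun f y => by rw [← hx, hz a]; simp)]
  rfl

lemma retraction_of_ext (Y X Z : QRep Q k)
    (hξ : ∀ ξ : ∀ a, Y.carrier (Q.tgt a) →ₗ[k] Z.carrier (Q.src a), PRel Y Z ξ → ∀ a, ξ a = 0)
    (u : ∀ i, Y.carrier i →ₗ[k] X.carrier i) (v : ∀ i, X.carrier i →ₗ[k] Z.carrier i)
    (hu : ∀ a y, u _ (Y.map a y) = X.map a (u _ y))
    (hv : ∀ a x, v _ (X.map a x) = Z.map a (v _ x))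
    (hui : ∀ i, Function.Injective (u i)) (hvs : ∀ i, Function.Surjective (v i))
    (huv : ∀ i y, v i (u i y) = 0) (hvu : ∀ i x, v i x = 0 → ∃ y, u i y = x) :
    ∃ p : ∀ i, X.carrier i →ₗ[k] Y.carrier i, (∀ i y, p i (u i y) = y) ∧
      ∀ a x, p _ (X.map a x) = Y.map a (p _ x) := by
  have hp : ∀ i, ∃ p : X.carrier i →ₗ[k] Y.carrier i, ∀ y, p (u i y) = y := by
    intro i
    obtain ⟨g, hg⟩ := (u i).exists_leftInverse_of_injective (LinearMap.ker_eq_bot.mpr (hui i))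
    exact ⟨g, fun y => LinearMap.congr_fun hg y⟩
  have hs : ∀ i, ∃ s : Z.carrier i →ₗ[k] X.carrier i, ∀ z, v i (s z) = z := by
    intro i
    obtain ⟨g, hg⟩ := (v i).exists_rightInverse_of_surjective (LinearMap.range_eq_top.mpr (hvs i))
    exact ⟨g, fun y => LinearMap.congr_fun hg y⟩
  choose p hp using hp
  choose s hs using hs
  let d : ∀ a, X.carrier (Q.src a) →ₗ[k] Y.carrier (Q.tgt a) := fun a =>
    (Y.map a).comp (p (Q.src a)) - (p (Q.tgt a)).comp (X.map a)
  have hd : ∀ a y, d a (u _ y) = 0 := by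
    intro a y
    simp [d, hp, ← hu]
  obtain ⟨h, hh⟩ := ext_zero Y Z hξ (fun a => (d a).comp (s (Q.src a)))
  have hφ : ∀ a x, Y.map a (h _ (v _ x)) - h _ (v _ (X.map a x)) =
      Y.map a (p _ x) - p _ (X.map a x) := by
    intro a x
    have h1 := LinearMap.congr_fun (hh a) (v _ x)
    obtain ⟨y, hy⟩ := hvu _ (s _ (v _ x) - x) (by rw [map_sub, hs, sub_self])
    have h2 := hd a y
    rw [hy, map_sub, sub_eq_zero] at h2
    simp only [LinearMap.sub_apply, LinearMap.comp_apply, h2] at h1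
    rw [hv, h1]
    rfl
  refine ⟨fun i => p i - (h i).comp (v i), fun i y => ?_, fun a x => ?_⟩
  · simp [hp, huv]
  · have := hφ a x
    simp only [LinearMap.sub_apply, LinearMap.comp_apply, map_sub]
    rw [sub_eq_sub_iff_add_eq_add] at this ⊢
    rw [add_comm, this, add_comm]

lemma split_of_ext (X : QRep Q k) (Y : SubRep X)
    (hξ : ∀ ξ : ∀ a, Y.toRep.carrier (Q.tgt a) →ₗ[k] (X.quotBy Y).carrier (Q.src a),
      PRel Y.toRep (X.quotBy Y) ξ → ∀ a, ξ a = 0) :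
    ∃ W : SubRep X, ∀ i, IsCompl (Y.mod i) (W.mod i) := by
  obtain ⟨p, hp, hc⟩ := retraction_of_ext Y.toRep X (X.quotBy Y) hξ
    (fun i => (Y.mod i).subtype) (fun i => (Y.mod i).mkQ)
    (fun a y => rfl) (fun a x => rfl) (fun i => (Y.mod i).subtype_injective)
    (fun i => (Y.mod i).mkQ_surjective)
    (fun i y => (Submodule.Quotient.mk_eq_zero _).mpr y.2)
    (fun i x hx => ⟨⟨x, (Submodule.Quotient.mk_eq_zero _).mp hx⟩, rfl⟩)
  refine ⟨⟨fun i => LinearMap.ker (p i), ?_⟩, fun i => LinearMap.isCompl_of_proj (hp i)⟩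
  intro a x hx
  rw [LinearMap.mem_ker] at hx ⊢
  rw [hc, hx, map_zero]

lemma sum_eq_sum_subtype {ι M : Type*} [Fintype ι] [AddCommMonoid M] (p : ι → Prop)
    [DecidablePred p] {F : ι → M} (h : ∀ a, ¬ p a → F a = 0) :
    ∑ a, F a = ∑ a : {a // p a}, F a.1 := by
  rw [← Finset.subtype_univ, Finset.sum_subtype_eq_sum_filter, Finset.sum_filter]
  refine Finset.sum_congr rfl fun a _ => ?_
  split_ifs with ha
  · rfl
  · exact h a ha

/-- The key dimension estimate at a vertex. -/
lemma vertex_estimate (Y Z : QRep Q k)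
    (ξ : ∀ a, Y.carrier (Q.tgt a) →ₗ[k] Z.carrier (Q.src a)) (hrel : PRel Y Z ξ)
    (hY : ∀ N : SubRep Y, (∀ a, ∀ y ∈ N.mod (Q.tgt a), ξ a y = 0) → ∀ i, N.mod i = ⊥)
    (hZ : ∀ N : SubRep Z, (∀ a y, ξ a y ∈ N.mod (Q.src a)) → ∀ i, N.mod i = ⊤) (i : Q.V) :
    Y.dimVec i + Z.dimVec i ≤ ∑ a : Q.A, (if Q.src a = i then Y.dimVec (Q.tgt a) else 0) +
      ∑ a : Q.A, (if Q.tgt a = i then Z.dimVec (Q.src a) else 0) := by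
  classical
  let f : ∀ i, Y.carrier i →ₗ[k] (∀ a : {a : Q.A // Q.src a = i}, Y.carrier (Q.tgt a.1)) ×
      (∀ a : {a : Q.A // Q.tgt a = i}, Z.carrier (Q.src a.1)) := fun i =>
    LinearMap.prod
      (LinearMap.pi fun a => ((Y.map a.1).comp (LinearMap.proj (Q.src a.1))).comp
        (LinearMap.single k Y.carrier i))
      (LinearMap.pi fun a => ((ξ a.1).comp (LinearMap.proj (Q.tgt a.1))).comp
        (LinearMap.single k Y.carrier i))
  let g : ∀ i, ((∀ a : {a : Q.A // Q.src a = i}, Y.carrier (Q.tgt a.1)) ×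
      (∀ a : {a : Q.A // Q.tgt a = i}, Z.carrier (Q.src a.1))) →ₗ[k] Z.carrier i := fun i =>
    LinearMap.coprod
      (∑ a : {a : Q.A // Q.src a = i}, ((LinearMap.proj i).comp (LinearMap.single k Z.carrier (Q.src a.1))).comp
        ((ξ a.1).comp (LinearMap.proj a)))
      (- ∑ a : {a : Q.A // Q.tgt a = i}, ((LinearMap.proj i).comp (LinearMap.single k Z.carrier (Q.tgt a.1))).comp
        ((Z.map a.1).comp (LinearMap.proj a)))
  have hf : ∀ i, LinearMap.ker (f i) = ⊥ := by
    refine hY ⟨fun i => LinearMap.ker (f i), ?_⟩ ?_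
    · intro a y hy
      have h1 := congrFun (congrArg Prod.fst (LinearMap.mem_ker.mp hy)) ⟨a, rfl⟩
      simp [f] at h1
      rw [h1]
      exact Submodule.zero_mem _
    · intro a y hy
      have h1 := congrFun (congrArg Prod.snd (LinearMap.mem_ker.mp hy)) ⟨a, rfl⟩
      simpa [f] using h1
  have hg : ∀ i, LinearMap.range (g i) = ⊤ := by
    refine hZ ⟨fun i => LinearMap.range (g i), ?_⟩ ?_
    · intro a z hz
      refine ⟨(0, Pi.single ⟨a, rfl⟩ (-z)), ?_⟩
      simp only [g, LinearMap.coprod_apply, LinearMap.neg_apply, LinearMap.sum_apply]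
      rw [Finset.sum_eq_single (⟨a, rfl⟩ : {b : Q.A // Q.tgt b = Q.tgt a})]
      · simp
      · intro b _ hb
        simp [Pi.single_eq_of_ne hb]
      · simp
    · intro a y
      refine ⟨(Pi.single ⟨a, rfl⟩ y, 0), ?_⟩
      simp only [g, LinearMap.coprod_apply, LinearMap.neg_apply, LinearMap.sum_apply]
      rw [Finset.sum_eq_single (⟨a, rfl⟩ : {b : Q.A // Q.src b = Q.src a})]
      · simp
      · intro b _ hb
        simp [Pi.single_eq_of_ne hb]
      · simp
  have hgf : LinearMap.range (f i) ≤ LinearMap.ker (g i) := by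
    rintro _ ⟨y, rfl⟩
    rw [LinearMap.mem_ker]
    have h := hrel (Pi.single i y) i
    rw [sum_eq_sum_subtype (fun a => Q.src a = i), sum_eq_sum_subtype (fun a => Q.tgt a = i)] at h
    · simp only [f, g, LinearMap.coprod_apply, LinearMap.neg_apply, LinearMap.sum_apply,
        LinearMap.comp_apply, LinearMap.prod_apply, Function.prod_apply, LinearMap.pi_apply,
        LinearMap.proj_apply, LinearMap.coe_single]
      rw [h, add_neg_cancel]
    · intro a ha
      exact Pi.single_eq_of_ne (Ne.symm ha) _
    · intro a ha
      exact Pi.single_eq_of_ne (Ne.symm ha) _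
  have d1 := LinearMap.finrank_range_add_finrank_ker (f i)
  have d2 := LinearMap.finrank_range_add_finrank_ker (g i)
  rw [hf i, finrank_bot] at d1
  rw [hg i, finrank_top, Module.finrank_prod, Module.finrank_pi_fintype,
    Module.finrank_pi_fintype] at d2
  have d3 := Submodule.finrank_mono hgf
  have d4 : Module.finrank k (Y.carrier i) + Module.finrank k (Z.carrier i) ≤
    ∑ a : {a : Q.A // Q.src a = i}, Module.finrank k (Y.carrier (Q.tgt a.1)) +
    ∑ a : {a : Q.A // Q.tgt a = i}, Module.finrank k (Z.carrier (Q.src a.1)) := by omega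
  rw [← Finset.sum_filter, ← Finset.sum_filter, ← Finset.sum_subtype_eq_sum_filter,
    ← Finset.sum_subtype_eq_sum_filter]
  simp only [QRep.dimVec, Finset.subtype_univ]
  exact_mod_cast d4

end Helpers

section Helpers2

variable {Q : FinQuiver} {k : Type} [Field k]

lemma finrank_map_sub {V : Type} [AddCommGroup V] [Module k V]
    (U : Submodule k V) (K : Submodule k U) :
    Module.finrank k (Submodule.map U.subtype K) = Module.finrank k K :=
  (Submodule.equivMapOfInjective U.subtype U.subtype_injective K).finrank_eq.symm

lemma finrank_comap_quot {V : Type} [AddCommGroup V] [Module k V] [FiniteDimensional k V]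
    (U : Submodule k V) (L : Submodule k (V ⧸ U)) :
    Module.finrank k (Submodule.comap U.mkQ L) = Module.finrank k L + Module.finrank k U := by
  have h := LinearMap.finrank_range_add_finrank_ker (U.mkQ.domRestrict (Submodule.comap U.mkQ L))
  rw [LinearMap.range_domRestrict, Submodule.map_comap_eq_of_surjective U.mkQ_surjective,
    LinearMap.ker_domRestrict, Submodule.ker_mkQ] at h
  have hle : U ≤ Submodule.comap U.mkQ L := by
    intro x hx
    rw [Submodule.mem_comap, Submodule.mkQ_apply, (Submodule.Quotient.mk_eq_zero U).mpr hx]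
    exact Submodule.zero_mem _
  rw [← h, (Submodule.comapSubtypeEquivOfLe hle).finrank_eq]

lemma sup_map_sub {V : Type} [AddCommGroup V] [Module k V]
    (U : Submodule k V) (A B : Submodule k U) (h : A ⊔ B = ⊤) :
    Submodule.map U.subtype A ⊔ Submodule.map U.subtype B = U := by
  rw [← Submodule.map_sup, h]
  simp

lemma PRel.transport {Y Z Y' Z' : QRep Q k}
    {ξ : ∀ a, Y.carrier (Q.tgt a) →ₗ[k] Z.carrier (Q.src a)} (hrel : PRel Y Z ξ)
    (ξ' : ∀ a, Y'.carrier (Q.tgt a) →ₗ[k] Z'.carrier (Q.src a))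
    (v : ∀ i, Y.carrier i →ₗ[k] Y'.carrier i) (u : ∀ i, Z'.carrier i →ₗ[k] Z.carrier i)
    (hv : ∀ a y, v _ (Y.map a y) = Y'.map a (v _ y))
    (hu : ∀ a z, u _ (Z'.map a z) = Z.map a (u _ z))
    (hvs : ∀ i, Function.Surjective (v i)) (hui : ∀ i, Function.Injective (u i))
    (hξ : ∀ a y, u _ (ξ' a (v _ y)) = ξ a y) : PRel Y' Z' ξ' := by
  intro y' i
  choose y hy using fun i => hvs i (y' i)
  apply hui i
  have hs : ∀ (j : Q.V) (z : Z'.carrier j), u i ((Pi.single j z : ∀ j, Z'.carrier j) i) =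
      (Pi.single j (u j z) : ∀ j, Z.carrier j) i := by
    intro j z
    exact Pi.apply_single (fun i => u i) (fun i => map_zero _) j z i
  rw [map_sum, map_sum]
  simp only [hs, hu]
  have h := hrel y i
  simp only [← hy, ← hv, hξ]
  exact h

/-- A subrepresentation of a subrepresentation, seen in the ambient representation. -/
def SubRep.mapSub {X : QRep Q k} (U : SubRep X) (K : SubRep U.toRep) : SubRep X where
  mod i := Submodule.map (U.mod i).subtype (K.mod i)
  stable := by
    rintro a _ ⟨x, hx, rfl⟩
    exact ⟨U.toRep.map a x, K.stable a x hx, rfl⟩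

lemma SubRep.dimVec_mapSub {X : QRep Q k} (U : SubRep X) (K : SubRep U.toRep) :
    (U.mapSub K).dimVec = K.dimVec := by
  funext i
  exact congrArg Nat.cast (finrank_map_sub (U.mod i) (K.mod i))

/-- Preimage in `X` of a subrepresentation of `X / U`. -/
def SubRep.comapQuot {X : QRep Q k} (U : SubRep X) (L : SubRep (X.quotBy U)) : SubRep X where
  mod i := Submodule.comap (U.mod i).mkQ (L.mod i)
  stable a x hx := L.stable a _ hx

lemma SubRep.dimVec_comapQuot {X : QRep Q k} (U : SubRep X) (L : SubRep (X.quotBy U)) :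
    (U.comapQuot L).dimVec = L.dimVec + U.dimVec := by
  funext i
  exact (congrArg Nat.cast (finrank_comap_quot (U.mod i) (L.mod i))).trans (Nat.cast_add _ _)

lemma dimVec_quotBy {X : QRep Q k} (U : SubRep X) :
    (X.quotBy U).dimVec = X.dimVec - U.dimVec := by
  funext i
  have := Submodule.finrank_quotient_add_finrank (U.mod i)
  change ((Module.finrank k (X.carrier i ⧸ U.mod i) : ℕ) : ℤ) =
    Module.finrank k (X.carrier i) - Module.finrank k (U.mod i)
  omega

lemma dimVec_isCompl {X : QRep Q k} (U W : SubRep X) (h : ∀ i, IsCompl (U.mod i) (W.mod i)) :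
    X.dimVec = U.dimVec + W.dimVec := by
  funext i
  have := Submodule.finrank_add_eq_of_isCompl (h i)
  simp only [QRep.dimVec, SubRep.dimVec, Pi.add_apply]
  omega

end Helpers2

section Helpers3

variable (Q : AffineQuiver) {k : Type} [Field k]

lemma AffineQuiver.defect_add (x y : Q.V → ℤ) : Q.defect (x + y) = Q.defect x + Q.defect y := by
  simp only [AffineQuiver.defect, FinQuiver.eulerForm, Pi.add_apply, mul_add,
    Finset.sum_add_distrib]
  ring

lemma AffineQuiver.defect_zero : Q.defect 0 = 0 := by
  simp [AffineQuiver.defect, FinQuiver.eulerForm]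

lemma AffineQuiver.defect_sub (x y : Q.V → ℤ) : Q.defect (x - y) = Q.defect x - Q.defect y := by
  have := Q.defect_add (x - y) y
  rw [sub_add_cancel] at this
  omega

lemma AffineQuiver.defect_le (Y Z : QRep Q.toFinQuiver k)
    (ξ : ∀ a, Y.carrier (Q.tgt a) →ₗ[k] Z.carrier (Q.src a)) (hrel : PRel Y Z ξ)
    (hY : ∀ N : SubRep Y, (∀ a, ∀ y ∈ N.mod (Q.tgt a), ξ a y = 0) → ∀ i, N.mod i = ⊥)
    (hZ : ∀ N : SubRep Z, (∀ a y, ξ a y ∈ N.mod (Q.src a)) → ∀ i, N.mod i = ⊤) :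
    Q.defect Y.dimVec ≤ Q.defect Z.dimVec := by
  have h1 : ∑ i, Q.δ i * (Y.dimVec i + Z.dimVec i) ≤ ∑ i, Q.δ i *
      (∑ a : Q.A, (if Q.src a = i then Y.dimVec (Q.tgt a) else 0) +
      ∑ a : Q.A, (if Q.tgt a = i then Z.dimVec (Q.src a) else 0)) :=
    Finset.sum_le_sum fun i _ => mul_le_mul_of_nonneg_left
      (vertex_estimate Y Z ξ hrel hY hZ i) (Q.delta_pos i).le
  simp only [mul_add, Finset.sum_add_distrib, Finset.mul_sum] at h1
  rw [Finset.sum_comm, Finset.sum_comm (γ := Q.V) (α := Q.A)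
    (f := fun i a => Q.δ i * (if Q.tgt a = i then Z.dimVec (Q.src a) else 0))] at h1
  simp only [mul_ite, mul_zero, Finset.sum_ite_eq, Finset.mem_univ, if_true] at h1
  have h2 := (Q.radical_iff Q.δ).mpr ⟨1, by simp⟩ Z.dimVec
  simp only [AffineQuiver.defect]
  simp only [FinQuiver.eulerForm] at h2 ⊢
  have e1 : ∑ i, Z.dimVec i * Q.δ i = ∑ i, Q.δ i * Z.dimVec i :=
    Finset.sum_congr rfl fun i _ => mul_comm _ _
  have e2 : ∑ a, Z.dimVec (Q.src a) * Q.δ (Q.tgt a) = ∑ a, Q.δ (Q.tgt a) * Z.dimVec (Q.src a) :=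
    Finset.sum_congr rfl fun i _ => mul_comm _ _
  rw [e1, e2] at h2
  linarith

lemma AffineQuiver.rel_eq_zero (Y Z : QRep Q.toFinQuiver k)
    (hY : ∀ K : SubRep Y, (∃ i, K.mod i ≠ ⊤) → Q.defect K.dimVec < Q.defect Y.dimVec)
    (hZ : ∀ L : SubRep Z, Q.defect L.dimVec ≤ 0)
    (ξ : ∀ a, Y.carrier (Q.tgt a) →ₗ[k] Z.carrier (Q.src a)) (hrel : PRel Y Z ξ) :
    ∀ a, ξ a = 0 := by
  let PK : SubRep Y → Prop := fun N => ∀ a, ∀ y ∈ N.mod (Q.tgt a), ξ a y = 0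
  let PL : SubRep Z → Prop := fun N => ∀ a y, ξ a y ∈ N.mod (Q.src a)
  let K : SubRep Y :=
    { mod := fun i => ⨆ N : {N // PK N}, N.1.mod i
      stable := by
        intro a
        suffices hs : (⨆ N : {N // PK N}, N.1.mod (Q.src a)) ≤
            Submodule.comap (Y.map a) (⨆ N : {N // PK N}, N.1.mod (Q.tgt a)) from
          fun x hx => hs hx
        refine iSup_le fun N x hx => ?_
        exact (le_iSup (fun N : {N // PK N} => N.1.mod (Q.tgt a)) N) (N.1.stable a x hx) }
  let L : SubRep Z :=
    { mod := fun i => ⨅ N : {N // PL N}, N.1.mod i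
      stable := by
        intro a x hx
        rw [Submodule.mem_iInf] at hx ⊢
        exact fun N => N.1.stable a x (hx N) }
  have hK : ∀ a, K.mod (Q.tgt a) ≤ LinearMap.ker (ξ a) := fun a =>
    iSup_le fun N x hx => N.2 a x hx
  have hKm : ∀ N, PK N → ∀ i, N.mod i ≤ K.mod i := fun N hN i =>
    le_iSup (fun N : {N // PK N} => N.1.mod i) ⟨N, hN⟩
  have hL : ∀ a y, ξ a y ∈ L.mod (Q.src a) := fun a y => by
    change ξ a y ∈ ⨅ N : {N // PL N}, N.1.mod (Q.src a)
    rw [Submodule.mem_iInf]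
    exact fun N => N.2 a y
  have hLm : ∀ N, PL N → ∀ i, L.mod i ≤ N.mod i := fun N hN i =>
    iInf_le (fun N : {N // PL N} => N.1.mod i) ⟨N, hN⟩
  let ξ' : ∀ a, (Y.quotBy K).carrier (Q.tgt a) →ₗ[k] L.toRep.carrier (Q.src a) := fun a =>
    (K.mod (Q.tgt a)).liftQ ((ξ a).codRestrict (L.mod (Q.src a)) (hL a)) (by
      intro y hy
      exact Subtype.ext (hK a hy))
  have hrel' : PRel (Y.quotBy K) L.toRep ξ' :=
    hrel.transport ξ' (fun i => (K.mod i).mkQ) (fun i => (L.mod i).subtype)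
      (fun a y => rfl) (fun a z => rfl) (fun i => (K.mod i).mkQ_surjective)
      (fun i => (L.mod i).subtype_injective) (fun a y => rfl)
  have hle : Q.defect (Y.quotBy K).dimVec ≤ Q.defect L.toRep.dimVec := by
    refine Q.defect_le _ _ ξ' hrel' ?_ ?_
    · intro N hN i
      have := hKm (K.comapQuot N) (fun a y hy => congrArg Subtype.val (hN a _ hy)) i
      rw [eq_bot_iff]
      intro z hz
      obtain ⟨y, rfl⟩ := (K.mod i).mkQ_surjective z
      exact (Submodule.Quotient.mk_eq_zero _).mpr (this hz)
    · intro N hN i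
      have := hLm (L.mapSub N) (fun a y => ⟨_, hN a ((K.mod _).mkQ y), rfl⟩) i
      rw [eq_top_iff]
      intro z _
      obtain ⟨w, hw, hwz⟩ := this z.2
      have : w = z := Subtype.ext hwz
      exact this ▸ hw
  rw [dimVec_quotBy, Q.defect_sub] at hle
  have h0 : Q.defect L.toRep.dimVec ≤ 0 := hZ L
  have hKtop : ∀ i, K.mod i = ⊤ := by
    by_contra hne
    push Not at hne
    have := hY K hne
    omega
  intro a
  ext y
  exact hK a (by rw [hKtop]; trivial)

lemma AffineQuiver.defect_summand (X : QRep Q.toFinQuiver k)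
    (hX : ∀ U W : SubRep X, (∀ i, IsCompl (U.mod i) (W.mod i)) →
        U.toRep.Indecomposable → Q.defect U.dimVec = 0) :
    ∀ (n : ℕ) (U W : SubRep X), (∀ i, IsCompl (U.mod i) (W.mod i)) → ∑ i, U.dimVec i ≤ n →
      Q.defect U.dimVec = 0 := by
  intro n
  induction n with
  | zero =>
    intro U W _ hn
    have h0 : ∀ i, 0 ≤ U.dimVec i := fun i => Int.natCast_nonneg _
    have h1 : ∑ i, U.dimVec i = 0 := le_antisymm (by simpa using hn)
      (Finset.sum_nonneg fun i _ => h0 i)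
    have : U.dimVec = 0 := by
      funext i
      exact (Finset.sum_eq_zero_iff_of_nonneg fun i _ => h0 i).mp h1 i (Finset.mem_univ i)
    rw [this, Q.defect_zero]
  | succ n ih =>
    intro U W hUW hn
    by_cases hI : U.toRep.Indecomposable
    · exact hX U W hUW hI
    by_cases hz : ∃ i, 0 < Module.finrank k (U.toRep.carrier i)
    · have : ∃ A B : SubRep U.toRep, (∀ i, IsCompl (A.mod i) (B.mod i)) ∧
          (∃ i, A.mod i ≠ ⊥) ∧ (∃ i, B.mod i ≠ ⊥) := by
        by_contra hcon
        apply hI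
        refine ⟨hz, fun A B hAB => ?_⟩
        by_contra h'
        push Not at h'
        exact hcon ⟨A, B, hAB, h'.1, h'.2⟩
      obtain ⟨A, B, hAB, hA, hB⟩ := this
      have key : ∀ A B : SubRep U.toRep, (∀ i, IsCompl (A.mod i) (B.mod i)) →
          (∃ i, B.mod i ≠ ⊥) → Q.defect A.dimVec = 0 := by
        intro A B hAB hB
        rw [← U.dimVec_mapSub]
        let W' : SubRep X :=
          { mod := fun i => (U.mapSub B).mod i ⊔ W.mod i
            stable := by
              intro a
              suffices hs : (U.mapSub B).mod (Q.src a) ⊔ W.mod (Q.src a) ≤ Submodule.comap (X.map a)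
                  ((U.mapSub B).mod (Q.tgt a) ⊔ W.mod (Q.tgt a)) from fun x hx => hs hx
              refine sup_le (fun x hx => ?_) (fun x hx => ?_)
              · exact Submodule.mem_sup_left ((U.mapSub B).stable a x hx)
              · exact Submodule.mem_sup_right (W.stable a x hx) }
        refine ih (U.mapSub A) W' (fun i => ?_) ?_
        · have hs : (U.mapSub A).mod i ⊔ (U.mapSub B).mod i = U.mod i :=
            sup_map_sub (U.mod i) (A.mod i) (B.mod i) (hAB i).sup_eq_top
          have hd : Disjoint ((U.mapSub A).mod i) ((U.mapSub B).mod i) :=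
            Submodule.disjoint_map (U.mod i).subtype_injective (hAB i).disjoint
          constructor
          · exact hd.disjoint_sup_right_of_disjoint_sup_left (by rw [hs]; exact (hUW i).disjoint)
          · rw [codisjoint_iff]
            change _ ⊔ ((U.mapSub B).mod i ⊔ W.mod i) = ⊤
            rw [← sup_assoc, hs, (hUW i).sup_eq_top]
        · rw [U.dimVec_mapSub]
          have e : U.dimVec = A.dimVec + B.dimVec := dimVec_isCompl A B hAB
          rw [e] at hn
          simp only [Pi.add_apply, Finset.sum_add_distrib] at hn
          have hp : 0 < ∑ i, B.dimVec i := by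
            obtain ⟨i, hi⟩ := hB
            refine Finset.sum_pos' (fun i _ => Int.natCast_nonneg _) ⟨i, Finset.mem_univ i, ?_⟩
            have := Submodule.one_le_finrank_iff.mpr hi
            simp only [SubRep.dimVec]
            omega
          push_cast at hn
          linarith
      have e : U.dimVec = A.dimVec + B.dimVec := dimVec_isCompl A B hAB
      rw [e, Q.defect_add, key A B hAB hB, key B A (fun i => (hAB i).symm) hA, add_zero]
    · have : U.dimVec = 0 := by
        funext i
        push Not at hz
        have := hz i
        change ((Module.finrank k (U.mod i) : ℕ) : ℤ) = 0
        change Module.finrank k (U.mod i) ≤ 0 at this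
        omega
      rw [this, Q.defect_zero]

lemma SubRep.dimVec_le {Q : FinQuiver} {X : QRep Q k} (U : SubRep X) (i : Q.V) :
    U.dimVec i ≤ X.dimVec i := by
  have := Submodule.finrank_le (U.mod i)
  simp only [SubRep.dimVec, QRep.dimVec]
  omega

lemma AffineQuiver.exists_max (X : QRep Q.toFinQuiver k) (N : ℤ) (Y0 : SubRep X) :
    ∃ Y : SubRep X, ∀ U : SubRep X, N * Q.defect U.dimVec - ∑ i, U.dimVec i ≤
      N * Q.defect Y.dimVec - ∑ i, Y.dimVec i := by
  have hfin : (Set.range (SubRep.dimVec (X := X))).Finite := by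
    refine (Set.finite_Icc (0 : Q.V → ℤ) X.dimVec).subset ?_
    rintro _ ⟨U, rfl⟩
    exact ⟨fun i => Int.natCast_nonneg _, fun i => U.dimVec_le i⟩
  obtain ⟨_, ⟨Y, rfl⟩, hY⟩ := Set.exists_max_image _
    (fun d : Q.V → ℤ => N * Q.defect d - ∑ i, d i) hfin ⟨_, Y0, rfl⟩
  exact ⟨Y, fun U => hY _ ⟨U, rfl⟩⟩

end Helpers3

/-- **Proposition 1.** For a representation `X` of an affine quiver, the following are
equivalent: (i) every indecomposable direct summand `Z` of `X` (i.e. every complemented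
subrepresentation that is indecomposable) satisfies `∂(dim Z) = 0`; (ii) `∂(dim X) = 0`
and `∂(dim Y) ≤ 0` for every subrepresentation `Y ⊆ X`. -/
theorem regular_iff_defect_conditions
    (Q : AffineQuiver) (k : Type) [Field k] (X : QRep Q.toFinQuiver k) :
    (∀ U W : SubRep X, (∀ i, IsCompl (U.mod i) (W.mod i)) →
        U.toRep.Indecomposable → Q.defect U.dimVec = 0) ↔
      (Q.defect X.dimVec = 0 ∧ ∀ Y : SubRep X, Q.defect Y.dimVec ≤ 0) := by
  constructor
  · intro hX
    have hsum : ∀ U W : SubRep X, (∀ i, IsCompl (U.mod i) (W.mod i)) → Q.defect U.dimVec = 0 :=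
      fun U W h => Q.defect_summand X hX (∑ i, U.dimVec i).toNat U W h (Int.self_le_toNat _)
    let T : SubRep X := ⟨fun _ => ⊤, fun _ _ _ => trivial⟩
    let B : SubRep X := ⟨fun _ => ⊥, fun a x hx => by
      rw [(Submodule.mem_bot k).mp hx, map_zero]; exact Submodule.zero_mem _⟩
    have hT : T.dimVec = X.dimVec := by
      funext i
      change ((Module.finrank k (⊤ : Submodule k (X.carrier i)) : ℕ) : ℤ) = _
      rw [finrank_top]
      rfl
    refine ⟨hT ▸ hsum T B (fun i => isCompl_top_bot), fun Y0 => ?_⟩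
    by_contra hpos
    push Not at hpos
    have hnn : ∀ (U : SubRep X), 0 ≤ ∑ i, U.dimVec i := fun U =>
      Finset.sum_nonneg fun i _ => Int.natCast_nonneg _
    have hle : ∀ (U : SubRep X), ∑ i, U.dimVec i ≤ ∑ i, X.dimVec i := fun U =>
      Finset.sum_le_sum fun i _ => U.dimVec_le i
    obtain ⟨N, hN⟩ : ∃ N : ℤ, N = ∑ i, X.dimVec i + 1 := ⟨_, rfl⟩
    obtain ⟨Y, hY⟩ := Q.exists_max X N Y0
    have hNpos : 0 < N := by have := hnn Y; have := hle Y; omega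
    have hYpos : 0 < Q.defect Y.dimVec := by
      have h1 := hY Y0
      have h2 := hle Y0
      have h3 := hnn Y
      by_contra hc
      push Not at hc
      nlinarith
    obtain ⟨W, hW⟩ := split_of_ext X Y (Q.rel_eq_zero Y.toRep (X.quotBy Y) (by
      rintro K ⟨j, hj⟩
      have h1 := hY (Y.mapSub K)
      rw [Y.dimVec_mapSub] at h1
      have h2 : ∑ i, K.dimVec i < ∑ i, Y.dimVec i := by
        refine Finset.sum_lt_sum (fun i _ => K.dimVec_le i) ⟨j, Finset.mem_univ j, ?_⟩
        have := Submodule.finrank_lt hj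
        exact Int.ofNat_lt.mpr this
      change _ < Q.defect Y.dimVec
      by_contra hc
      push Not at hc
      nlinarith) (by
      intro L
      have h1 := hY (Y.comapQuot L)
      have h2 := hle (Y.comapQuot L)
      have h3 := hnn Y
      rw [Y.dimVec_comapQuot, Q.defect_add] at h1
      rw [Y.dimVec_comapQuot] at h2
      by_contra hc
      push Not at hc
      nlinarith))
    have := hsum Y W hW
    omega
  · rintro ⟨h0, hle⟩ U W hUW -
    have h1 := hle U
    have h2 := hle W
    rw [dimVec_isCompl U W hUW, Q.defect_add] at h0
    omega
end

section
/- Let Q be an affine quiver and k a field. Say a representation X of Q over k satisfies condition (R) if ∂(dim X) = 0 and ∂(dim Y) ≤ 0 for every subrepresentation Y ⊆ X. If X ⊆ Z is a subrepresentation such that X satisfies (R) and the quotient representation Z/X satisfies (R), then Z satisfies (R). (The class of regular representations is closed under extensions.) -/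
open scoped BigOperators

/-- Condition (R): `∂(dim X) = 0` and `∂(dim Y) ≤ 0` for every subrepresentation `Y ⊆ X`
(i.e. `X` is a regular representation). -/
def RegCond (Q : AffineQuiver) {k : Type} [Field k] (X : QRep Q.toFinQuiver k) : Prop :=
  Q.defect X.dimVec = 0 ∧ ∀ Y : SubRep X, Q.defect Y.dimVec ≤ 0

theorem AffineQuiver.defect_add_aux (Q : AffineQuiver) (x y : Q.V → ℤ) :
    Q.defect (x + y) = Q.defect x + Q.defect y := by
  simp only [AffineQuiver.defect, FinQuiver.eulerForm, Pi.add_apply, mul_add,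
    Finset.sum_add_distrib]
  ring

theorem finrank_split_aux {k M : Type} [Field k] [AddCommGroup M] [Module k M]
    [FiniteDimensional k M] (U Y : Submodule k M) :
    Module.finrank k Y =
      Module.finrank k (Y.comap U.subtype) + Module.finrank k (Y.map U.mkQ) := by
  have h := LinearMap.finrank_range_add_finrank_ker (U.mkQ.comp Y.subtype)
  have h1 : LinearMap.range (U.mkQ.comp Y.subtype) = Y.map U.mkQ := by
    rw [LinearMap.range_comp, Submodule.range_subtype]
  have h2 : LinearMap.ker (U.mkQ.comp Y.subtype) = U.comap Y.subtype := by
    rw [LinearMap.ker_comp, Submodule.ker_mkQ]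
  have h3 : Module.finrank k (U.comap Y.subtype) = Module.finrank k (Y.comap U.subtype) := by
    rw [← Submodule.finrank_map_subtype_eq Y, ← Submodule.finrank_map_subtype_eq U,
      Submodule.map_comap_subtype, Submodule.map_comap_subtype, inf_comm]
  rw [h1, h2, h3] at h
  omega

/-- The class of regular representations of an affine quiver is closed under extensions:
if a subrepresentation `U ⊆ Z` satisfies (R) and the quotient `Z/U` satisfies (R), then
`Z` satisfies (R). -/
theorem regular_closed_under_extensions
    (Q : AffineQuiver) (k : Type) [Field k] (Z : QRep Q.toFinQuiver k) (U : SubRep Z)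
    (hSub : RegCond Q U.toRep) (hQuot : RegCond Q (Z.quotBy U)) :
    RegCond Q Z := by
  have e1 : Z.dimVec = U.toRep.dimVec + (Z.quotBy U).dimVec := by
    funext i
    have h := Submodule.finrank_quotient_add_finrank (U.mod i)
    change (Module.finrank k (Z.carrier i) : ℤ) = (Module.finrank k (U.mod i) : ℤ) +
      (Module.finrank k (Z.carrier i ⧸ U.mod i) : ℤ)
    omega
  refine ⟨?_, fun Y => ?_⟩
  · rw [e1, Q.defect_add_aux, hSub.1, hQuot.1, add_zero]
  · let Y1 : SubRep U.toRep :=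
      { mod := fun i => (Y.mod i).comap (U.mod i).subtype
        stable := fun a x hx => Y.stable a x.1 hx }
    let Y2 : SubRep (Z.quotBy U) :=
      { mod := fun i => (Y.mod i).map (U.mod i).mkQ
        stable := by
          rintro a _ ⟨y, hy, rfl⟩
          exact ⟨Z.map a y, Y.stable a y hy, rfl⟩ }
    have e : Y.dimVec = Y1.dimVec + Y2.dimVec := by
      funext i
      have h := finrank_split_aux (U.mod i) (Y.mod i)
      exact (congrArg (Nat.cast : ℕ → ℤ) h).trans (Nat.cast_add _ _)
    rw [e, Q.defect_add_aux]
    exact add_nonpos (hSub.2 Y1) (hQuot.2 Y2)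
end

section
/- Let Q be an affine quiver with n + 1 vertices and let δ be the minimal positive imaginary root. For every finite field F_q, the number of isomorphism classes of indecomposable representations of Q over F_q with dimension vector δ is exactly q + n; moreover every indecomposable representation of dimension vector δ over F_q is absolutely indecomposable. In particular a_δ(q) = q + dim g_δ, confirming Kac's conjecture in dimension δ. -/
open scoped BigOperators

section MatrixRep

variable (Q : FinQuiver) (k : Type) [Field k]

/-- The space of representations of `Q` on the fixed vector spaces `k^{d i}`,
in matrix form. -/
def MRep (d : Q.V → ℕ) : Type :=
  ∀ a : Q.A, Matrix (Fin (d (Q.tgt a))) (Fin (d (Q.src a))) k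

variable {Q k}

/-- A family of subspaces is a subrepresentation of `x` if it is stable under all the
arrow maps of `x`. -/
def MSub {d : Q.V → ℕ} (x : MRep Q k d) (U : ∀ i, Submodule k (Fin (d i) → k)) : Prop :=
  ∀ a : Q.A, ∀ v ∈ U (Q.src a), (x a).mulVec v ∈ U (Q.tgt a)

/-- A representation is indecomposable if it is nonzero and is not the internal direct
sum of two nonzero subrepresentations. -/
def MIndec {d : Q.V → ℕ} (x : MRep Q k d) : Prop :=
  (∃ i, 0 < d i) ∧
    ∀ U W : ∀ i, Submodule k (Fin (d i) → k), MSub x U → MSub x W →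
      (∀ i, IsCompl (U i) (W i)) →
        (∀ i, U i = ⊥) ∨ (∀ i, W i = ⊥)

/-- Isomorphism of representations: simultaneous conjugation by a family of invertible
matrices. -/
def MIso {d : Q.V → ℕ} (x y : MRep Q k d) : Prop :=
  ∃ g : ∀ i, GL (Fin (d i)) k,
    ∀ a : Q.A, y a = ((g (Q.tgt a) : Matrix (Fin (d (Q.tgt a))) (Fin (d (Q.tgt a))) k) * x a) *
      (((g (Q.src a))⁻¹ : GL (Fin (d (Q.src a))) k) : Matrix (Fin (d (Q.src a))) (Fin (d (Q.src a))) k)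

/-- Extension of scalars along a field extension: apply the field embedding to all
matrix entries. -/
def mapRep {d : Q.V → ℕ} (K : Type) [Field K] [Algebra k K] (x : MRep Q k d) :
    MRep Q K d :=
  fun a => (x a).map (algebraMap k K)

/-- A representation over `k` is absolutely indecomposable if it remains indecomposable
after extension of scalars to an algebraic closure of `k`. -/
def MAbsIndec {d : Q.V → ℕ} (x : MRep Q k d) : Prop :=
  MIndec x ∧ MIndec (mapRep (AlgebraicClosure k) x)

end MatrixRep


namespace Kac
open Module

section Arith
variable (Q : AffineQuiver)

theorem titsForm_add_mul (Q : FinQuiver) (x y : Q.V → ℤ) (m : ℤ) :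
    Q.titsForm (fun i => y i + m * x i) =
      Q.titsForm y + m * (Q.eulerForm x y + Q.eulerForm y x) + m ^ 2 * Q.titsForm x := by
  simp only [FinQuiver.titsForm, FinQuiver.eulerForm]
  have h1 : ∑ i, (y i + m * x i) * (y i + m * x i) =
      ∑ i, y i * y i + m * (∑ i, x i * y i + ∑ i, y i * x i) + m ^ 2 * ∑ i, x i * x i := by
    simp only [Finset.mul_sum, ← Finset.sum_add_distrib]
    exact Finset.sum_congr rfl fun i _ => by ring
  have h2 : ∑ a, (y (Q.src a) + m * x (Q.src a)) * (y (Q.tgt a) + m * x (Q.tgt a)) =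
      ∑ a, y (Q.src a) * y (Q.tgt a) + m * (∑ a, x (Q.src a) * y (Q.tgt a) +
        ∑ a, y (Q.src a) * x (Q.tgt a)) + m ^ 2 * ∑ a, x (Q.src a) * x (Q.tgt a) := by
    simp only [Finset.mul_sum, ← Finset.sum_add_distrib]
    exact Finset.sum_congr rfl fun i _ => by ring
  rw [h1, h2]; ring

theorem radical_of_tits_zero (x : Q.V → ℤ) (hx : Q.titsForm x = 0) : ∃ m : ℤ, x = m • Q.δ := by
  rw [← Q.radical_iff]
  intro y
  set b := Q.eulerForm x y + Q.eulerForm y x with hb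
  have key : ∀ m : ℤ, 0 ≤ Q.titsForm y + m * b := by
    intro m
    have := Q.posSemidef (fun i => y i + m * x i)
    rw [titsForm_add_mul, hx] at this
    simpa using this
  by_contra hne
  have hy := Q.posSemidef y
  have h1 := key (-(Q.titsForm y + 1) * b)
  have hb2 : 1 ≤ b * b := by
    have : 0 < b * b := mul_self_pos.mpr hne
    linarith
  nlinarith

theorem tits_delta : Q.titsForm Q.δ = 0 := by
  have := (Q.radical_iff Q.δ).2 ⟨1, by simp⟩ Q.δ
  unfold FinQuiver.titsForm
  linarith

theorem tits_pos {x : Q.V → ℤ} (h0 : ∀ i, 0 ≤ x i) (hle : ∀ i, x i ≤ Q.δ i) (hx : x ≠ 0)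
    (hd : x ≠ Q.δ) : 1 ≤ Q.titsForm x := by
  by_contra hcon
  have hz : Q.titsForm x = 0 := le_antisymm (by linarith) (Q.posSemidef x)
  obtain ⟨m, rfl⟩ := radical_of_tits_zero Q x hz
  obtain ⟨i, hi⟩ : ∃ i, (m • Q.δ) i ≠ 0 := by
    by_contra hh; push Not at hh; exact hx (funext hh)
  have h1 := h0 i
  have h2 := hle i
  have h3 := Q.delta_pos i
  simp only [Pi.smul_apply, smul_eq_mul] at hi h1 h2
  have hm : m = 1 := by
    have : 0 ≤ m := by by_contra h; push Not at h; nlinarith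
    have : m ≠ 0 := by rintro rfl; simp at hi
    have : m ≤ 1 := by by_contra h; push Not at h; nlinarith
    omega
  subst hm
  simp at hd

theorem tits_smul (Q : FinQuiver) (s : ℤ) (x : Q.V → ℤ) :
    Q.titsForm (fun i => s * x i) = s ^ 2 * Q.titsForm x := by
  simp only [FinQuiver.titsForm, FinQuiver.eulerForm, mul_sub, Finset.mul_sum]
  congr 1 <;> exact Finset.sum_congr rfl fun i _ => by ring

theorem delta_prim {s : ℤ} (hs : 0 < s) (h : ∀ i, s ∣ Q.δ i) : s = 1 := by
  choose y hy using h
  have h0 : Q.titsForm y = 0 := by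
    have h1 := tits_delta Q
    rw [show Q.δ = fun i => s * y i from funext hy, tits_smul] at h1
    rcases mul_eq_zero.1 h1 with h | h
    · exact absurd h (by positivity)
    · exact h
  obtain ⟨m, hm⟩ := radical_of_tits_zero Q y h0
  obtain ⟨i⟩ := Q.connected.nonempty
  have h1 : y i = m * Q.δ i := by rw [hm]; rfl
  have h2 := hy i
  have h3 := Q.delta_pos i
  have : (s * m - 1) * Q.δ i = 0 := by rw [sub_mul, mul_assoc, ← h1, ← h2]; ring
  rcases mul_eq_zero.1 this with h | h
  · exact Int.eq_one_of_mul_eq_one_right (b := m) hs.le (by linarith)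
  · omega

end Arith

section General
universe u
variable {Q : FinQuiver} {F : Type*} [Field F]
variable {X : Q.V → Type u} [∀ i, AddCommGroup (X i)] [∀ i, Module F (X i)]

/-- Subrepresentations. -/
def IsSub (f : ∀ a, X (Q.src a) →ₗ[F] X (Q.tgt a)) (U : ∀ i, Submodule F (X i)) : Prop :=
  ∀ a, ∀ v ∈ U (Q.src a), f a v ∈ U (Q.tgt a)

/-- Indecomposable representations. -/
def Indec (f : ∀ a, X (Q.src a) →ₗ[F] X (Q.tgt a)) : Prop :=
  (∃ i, ∃ v : X i, v ≠ 0) ∧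
    ∀ U W : ∀ i, Submodule F (X i), IsSub f U → IsSub f W →
      (∀ i, IsCompl (U i) (W i)) → (∀ i, U i = ⊥) ∨ (∀ i, W i = ⊥)

/-- The two-term complex computing Hom and Ext. -/
def dmap (f : ∀ a, X (Q.src a) →ₗ[F] X (Q.tgt a)) :
    (∀ i, X i →ₗ[F] X i) →ₗ[F] (∀ a, X (Q.src a) →ₗ[F] X (Q.tgt a)) where
  toFun φ a := f a ∘ₗ φ (Q.src a) - φ (Q.tgt a) ∘ₗ f a
  map_add' φ ψ := by
    funext a; ext v; simp; abel
  map_smul' c φ := by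
    funext a; ext v; simp [smul_sub]

/-- Endomorphisms of a representation. -/
def IsEnd (f : ∀ a, X (Q.src a) →ₗ[F] X (Q.tgt a)) (φ : ∀ i, X i →ₗ[F] X i) : Prop :=
  ∀ a v, φ (Q.tgt a) (f a v) = f a (φ (Q.src a) v)

theorem mem_ker_dmap (f : ∀ a, X (Q.src a) →ₗ[F] X (Q.tgt a)) (φ : ∀ i, X i →ₗ[F] X i) :
    φ ∈ LinearMap.ker (dmap f) ↔ IsEnd f φ := by
  rw [LinearMap.mem_ker, funext_iff]
  constructor
  · intro h a v
    have := LinearMap.congr_fun (h a) v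
    simp [dmap, sub_eq_zero] at this
    exact this.symm
  · intro h a
    ext v
    simp [dmap, h a v]

/-- Restriction of a representation to a subrepresentation. -/
def resRep (f : ∀ a, X (Q.src a) →ₗ[F] X (Q.tgt a)) (U : ∀ i, Submodule F (X i))
    (hU : IsSub f U) : ∀ a, U (Q.src a) →ₗ[F] U (Q.tgt a) :=
  fun a => (f a).restrict (hU a)

theorem isSub_range {f : ∀ a, X (Q.src a) →ₗ[F] X (Q.tgt a)} {φ : ∀ i, X i →ₗ[F] X i}
    (h : IsEnd f φ) : IsSub f (fun i => LinearMap.range (φ i)) := by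
  rintro a _ ⟨v, rfl⟩
  exact ⟨f a v, h a v⟩

theorem isSub_ker {f : ∀ a, X (Q.src a) →ₗ[F] X (Q.tgt a)} {φ : ∀ i, X i →ₗ[F] X i}
    (h : IsEnd f φ) : IsSub f (fun i => LinearMap.ker (φ i)) := by
  intro a v hv
  rw [LinearMap.mem_ker] at *
  rw [h a v, hv, map_zero]

theorem exists_factor {A B C : Type*} [AddCommGroup A] [AddCommGroup B] [AddCommGroup C]
    [Module F A] [Module F B] [Module F C] (p : A →ₗ[F] B) (g : A →ₗ[F] C)
    (h : LinearMap.ker p ≤ LinearMap.ker g) : ∃ c : B →ₗ[F] C, c ∘ₗ p = g := by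
  obtain ⟨s, hs⟩ := p.rangeRestrict.exists_rightInverse_of_surjective p.range_rangeRestrict
  obtain ⟨c, hc⟩ := LinearMap.exists_extend (g ∘ₗ s)
  refine ⟨c, ?_⟩
  ext v
  have h1 : c (p v) = g (s (p.rangeRestrict v)) := LinearMap.congr_fun hc (p.rangeRestrict v)
  have h2 : p (s (p.rangeRestrict v)) = p v :=
    congrArg Subtype.val (LinearMap.congr_fun hs (p.rangeRestrict v))
  have h3 : s (p.rangeRestrict v) - v ∈ LinearMap.ker p := by
    rw [LinearMap.mem_ker, map_sub, h2, sub_self]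
  have h4 := h h3
  rw [LinearMap.mem_ker, map_sub, sub_eq_zero] at h4
  rw [LinearMap.comp_apply, h1, h4]

variable [∀ i, FiniteDimensional F (X i)]

/-- total rank -/
noncomputable def rk (φ : ∀ i, X i →ₗ[F] X i) : ℕ := ∑ i, finrank F (LinearMap.range (φ i))

theorem eq_of_sum_le {ι : Type*} [Fintype ι] {a b : ι → ℕ} (h : ∀ i, a i ≤ b i)
    (h2 : ∑ i, b i ≤ ∑ i, a i) : ∀ i, a i = b i := by
  have := (Finset.sum_eq_sum_iff_of_le (s := Finset.univ) (f := a) (g := b) (fun i _ => h i)).1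
    (le_antisymm (Finset.sum_le_sum fun i _ => h i) h2)
  exact fun i => this i (Finset.mem_univ i)

/-- An endomorphism of minimal nonzero rank either is bijective or squares to zero. -/
theorem sq_zero {f : ∀ a, X (Q.src a) →ₗ[F] X (Q.tgt a)} (hf : Indec f)
    {θ : ∀ i, X i →ₗ[F] X i} (hθ : IsEnd f θ) (h0 : θ ≠ 0)
    (hmin : ∀ ψ, IsEnd f ψ → ψ ≠ 0 → rk θ ≤ rk ψ) (hnb : ¬ ∀ i, LinearMap.ker (θ i) = ⊥) :
    ∀ i v, θ i (θ i v) = 0 := by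
  by_contra hcon
  have h2 : IsEnd f (fun i => θ i ∘ₗ θ i) := by
    intro a v; simp [hθ a]
  have h3 : (fun i => θ i ∘ₗ θ i) ≠ 0 := by
    intro h
    apply hcon
    intro i v
    exact LinearMap.congr_fun (congr_fun h i) v
  have h4 := hmin _ h2 h3
  have h5 : ∀ i, finrank F (LinearMap.range (θ i ∘ₗ θ i)) = finrank F (LinearMap.range (θ i)) := by
    refine eq_of_sum_le (fun i => ?_) h4
    exact Submodule.finrank_mono (LinearMap.range_comp_le_range _ _)
  have h6 : ∀ i, LinearMap.range (θ i ∘ₗ θ i) = LinearMap.range (θ i) := fun i =>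
    Submodule.eq_of_le_of_finrank_eq (LinearMap.range_comp_le_range _ _) (h5 i)
  have h7 : ∀ i, IsCompl (LinearMap.range (θ i)) (LinearMap.ker (θ i)) := by
    intro i
    have hcod : Codisjoint (LinearMap.range (θ i)) (LinearMap.ker (θ i)) := by
      rw [codisjoint_iff, eq_top_iff]
      intro v _
      have : θ i v ∈ LinearMap.range (θ i ∘ₗ θ i) := by rw [h6 i]; exact ⟨v, rfl⟩
      obtain ⟨w, hw⟩ := this
      rw [Submodule.mem_sup]
      refine ⟨θ i w, ⟨w, rfl⟩, v - θ i w, ?_, by abel⟩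
      rw [LinearMap.mem_ker, map_sub, ← hw]; simp
    refine ⟨?_, hcod⟩
    have hs := Submodule.finrank_sup_add_finrank_inf_eq (LinearMap.range (θ i)) (LinearMap.ker (θ i))
    rw [codisjoint_iff.1 hcod, finrank_top, LinearMap.finrank_range_add_finrank_ker] at hs
    rw [disjoint_iff]
    exact Submodule.finrank_eq_zero.1 (by omega)
  rcases hf.2 _ _ (isSub_range hθ) (isSub_ker hθ) h7 with h | h
  · apply h0
    funext i
    exact LinearMap.range_eq_bot.1 (h i)
  · exact hnb h

theorem ringel {f : ∀ a, X (Q.src a) →ₗ[F] X (Q.tgt a)} (hf : Indec f)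
    (hsub : ∀ (U : ∀ i, Submodule F (X i)) (hU : IsSub f U), (∃ i, U i ≠ ⊤) →
      Indec (X := fun i => U i) (resRep f U hU) →
      Function.Surjective (dmap (X := fun i => U i) (resRep f U hU)))
    (φ : ∀ i, X i →ₗ[F] X i) (hφ : IsEnd f φ) (hφ0 : φ ≠ 0) : ∀ i, LinearMap.ker (φ i) = ⊥ := by
  classical
  -- choose `θ` of minimal rank
  obtain ⟨θ, ⟨hθ, h0⟩, hmin'⟩ := WellFounded.has_min (measure (fun ψ : ∀ i, X i →ₗ[F] X i => rk ψ)).wf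
    {ψ | IsEnd f ψ ∧ ψ ≠ 0} ⟨φ, hφ, hφ0⟩
  have hmin : ∀ ψ, IsEnd f ψ → ψ ≠ 0 → rk θ ≤ rk ψ := fun ψ h1 h2 => by
    have := hmin' ψ ⟨h1, h2⟩
    change ¬ (rk ψ < rk θ) at this
    omega
  by_cases hb : ∀ i, LinearMap.ker (θ i) = ⊥
  · -- then everything has full rank
    have h1 := hmin φ hφ hφ0
    have h2 : ∀ i, finrank F (LinearMap.range (φ i)) = finrank F (LinearMap.range (θ i)) := by
      refine eq_of_sum_le (fun i => ?_) h1
      have h3 := LinearMap.finrank_range_add_finrank_ker (θ i)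
      rw [hb i, finrank_bot] at h3
      have := LinearMap.finrank_range_add_finrank_ker (φ i)
      omega
    intro i
    have h3 := LinearMap.finrank_range_add_finrank_ker (θ i)
    rw [hb i, finrank_bot] at h3
    have h4 := LinearMap.finrank_range_add_finrank_ker (φ i)
    have h5 := h2 i
    exact Submodule.finrank_eq_zero.1 (by omega)
  exfalso
  have hsq := sq_zero hf hθ h0 hmin hb
  -- decompositions of the kernel
  let S : Set ((∀ i, Submodule F (X i)) × (∀ i, Submodule F (X i))) :=
    {p | IsSub f p.1 ∧ IsSub f p.2 ∧ (∀ i, p.1 i ⊔ p.2 i = LinearMap.ker (θ i)) ∧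
      (∀ i, Disjoint (p.1 i) (p.2 i)) ∧ ∃ i, ¬ LinearMap.range (θ i) ≤ p.2 i}
  have hS : S.Nonempty := by
    refine ⟨(fun i => LinearMap.ker (θ i), fun i => ⊥), isSub_ker hθ, ?_, ?_, ?_, ?_⟩
    · intro a v hv; simp at hv; simp [hv]
    · simp
    · simp
    · by_contra hh
      push Not at hh
      apply h0
      funext i
      exact LinearMap.range_eq_bot.1 (le_bot_iff.1 (hh i))
  obtain ⟨⟨U, W⟩, ⟨hU, hW, hUW, hdis, i0, hi0⟩, hSmin⟩ := WellFounded.has_min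
    (measure (fun p : (∀ i, Submodule F (X i)) × (∀ i, Submodule F (X i)) =>
      ∑ i, finrank F (p.1 i))).wf S hS
  simp only at hU hW hUW hdis hi0
  have hUk : ∀ i, U i ≤ LinearMap.ker (θ i) := fun i => by rw [← hUW i]; exact le_sup_left
  have hWk : ∀ i, W i ≤ LinearMap.ker (θ i) := fun i => by rw [← hUW i]; exact le_sup_right
  have hUtop : ∃ i, U i ≠ ⊤ := by
    by_contra hh; push Not at hh
    apply h0
    funext i
    have := hUk i
    rw [hh i, top_le_iff] at this
    exact LinearMap.ker_eq_top.1 this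
  have hUbot : ¬ ∀ i, U i = ⊥ := by
    intro hh
    apply hi0
    have := hUW i0
    rw [hh i0, bot_sup_eq] at this
    rw [this]
    rintro _ ⟨v, rfl⟩
    exact hsq i0 v
  have hUind : Indec (X := fun i => U i) (resRep f U hU) := by
    refine ⟨?_, ?_⟩
    · by_contra hh; push Not at hh
      apply hUbot
      intro i
      rw [eq_bot_iff]
      intro v hv
      have := hh i ⟨v, hv⟩
      simpa using congrArg Subtype.val this
    · intro A B hA hB hAB
      by_contra hcon
      push Not at hcon
      obtain ⟨⟨iA, hiA⟩, ⟨iB, hiB⟩⟩ := hcon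
      -- move to submodules of X
      have mv : ∀ C : ∀ i, Submodule F (U i), IsSub (X := fun i => U i) (resRep f U hU) C →
          IsSub f (fun i => (C i).map (U i).subtype) := by
        rintro C hC a _ ⟨v, hv, rfl⟩
        exact ⟨_, hC a v hv, rfl⟩
      have hsup : ∀ i, (A i).map (U i).subtype ⊔ (B i).map (U i).subtype = U i := by
        intro i
        rw [← Submodule.map_sup, (hAB i).sup_eq_top, Submodule.map_subtype_top]
      have hinf : ∀ i, (A i).map (U i).subtype ⊓ (B i).map (U i).subtype = ⊥ := by
        intro i
        rw [← Submodule.map_inf _ (U i).injective_subtype, (hAB i).inf_eq_bot, Submodule.map_bot]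
      have main : ∀ A B : ∀ i, Submodule F (X i), IsSub f A → IsSub f B →
          (∀ i, A i ⊔ B i = U i) → (∀ i, A i ⊓ B i = ⊥) → (∃ i, B i ≠ ⊥) →
          ∀ i, LinearMap.range (θ i) ≤ B i ⊔ W i := by
        intro A B hA hB hs hi ⟨j, hj⟩
        by_contra hcc
        push Not at hcc
        apply hSmin (A, fun i => B i ⊔ W i)
        · refine ⟨hA, ?_, ?_, ?_, hcc⟩
          · intro a v hv
            obtain ⟨b, hb, w, hw, rfl⟩ := Submodule.mem_sup.1 hv
            rw [map_add]
            exact Submodule.add_mem_sup (hB a b hb) (hW a w hw)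
          · intro i
            simp only
            rw [← sup_assoc, hs i, hUW i]
          · intro i
            simp only
            have h1 : Disjoint (A i) (B i) := disjoint_iff.2 (hi i)
            exact h1.disjoint_sup_right_of_disjoint_sup_left (by rw [hs i]; exact hdis i)
        · change ∑ i, finrank F (A i) < ∑ i, finrank F (U i)
          have hle : ∀ i, A i ≤ U i := fun i => by rw [← hs i]; exact le_sup_left
          refine Finset.sum_lt_sum (fun i _ => Submodule.finrank_mono (hle i)) ⟨j, Finset.mem_univ _, ?_⟩
          apply Submodule.finrank_lt_finrank_of_lt
          refine lt_of_le_of_ne (hle j) ?_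
          intro he
          apply hj
          have h1 := hs j
          have h2 := hi j
          rw [← he, sup_eq_left] at h1
          rw [inf_eq_right.2 h1] at h2
          exact h2
      have nb : ∀ C : ∀ i, Submodule F (U i), ∀ i, C i ≠ ⊥ → (C i).map (U i).subtype ≠ ⊥ := by
        intro C i hC h
        apply hC
        exact (Submodule.map_injective_of_injective (U i).injective_subtype) (by rw [h, Submodule.map_bot])
      have r1 := main _ _ (mv A hA) (mv B hB) hsup hinf ⟨iB, nb B iB hiB⟩ i0
      have r2 := main _ _ (mv B hB) (mv A hA) (fun i => by rw [sup_comm]; exact hsup i)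
        (fun i => by rw [inf_comm]; exact hinf i) ⟨iA, nb A iA hiA⟩ i0
      apply hi0
      intro v hv
      obtain ⟨b, hb, w, hw, h1⟩ := Submodule.mem_sup.1 (r1 hv)
      obtain ⟨a, ha, w', hw', h2⟩ := Submodule.mem_sup.1 (r2 hv)
      have hbU : b ∈ U i0 := by rw [← hsup i0]; exact Submodule.mem_sup_right hb
      have haU : a ∈ U i0 := by rw [← hsup i0]; exact Submodule.mem_sup_left ha
      have e1 : a - b = w - w' := by
        have : a + w' = b + w := by rw [h1, h2]
        rw [sub_eq_sub_iff_add_eq_add, this, add_comm]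
      have e2 : a - b ∈ U i0 ⊓ W i0 :=
        ⟨Submodule.sub_mem _ haU hbU, by rw [e1]; exact Submodule.sub_mem _ hw hw'⟩
      rw [disjoint_iff.1 (hdis i0)] at e2
      have e3 : a = b := sub_eq_zero.1 (by simpa using e2)
      have e4 : b ∈ (A i0).map (U i0).subtype ⊓ (B i0).map (U i0).subtype := ⟨e3 ▸ ha, hb⟩
      rw [hinf i0] at e4
      have e5 : b = 0 := by simpa using e4
      rw [← h1, e5, zero_add]
      exact hw
  have hsurj := hsub U hU hUtop hUind
  -- extend the projection of the kernel onto `U` along `W` to `ρ0 : X → U`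
  have hρ : ∀ i, ∃ ρ : X i →ₗ[F] U i, (∀ u : U i, ρ u = u) ∧ ∀ w ∈ W i, ρ w = 0 := by
    intro i
    obtain ⟨C, hWC, hC⟩ := (hdis i).symm.exists_isCompl
    refine ⟨Submodule.projectionOnto (U i) C hC.symm, fun u => ?_, fun w hw => ?_⟩
    · exact Submodule.projectionOnto_apply_left _ u
    · exact Submodule.projectionOnto_apply_of_mem_right _ (hWC hw)
  choose ρ0 hρU hρW using hρ
  -- ρ0 intertwines on the kernel
  have hcomm : ∀ a, ∀ v ∈ LinearMap.ker (θ (Q.src a)),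
      ρ0 (Q.tgt a) (f a v) = resRep f U hU a (ρ0 (Q.src a) v) := by
    intro a v hv
    rw [← hUW] at hv
    obtain ⟨u, hu, w, hw, rfl⟩ := Submodule.mem_sup.1 hv
    have e1 := hρU (Q.src a) ⟨u, hu⟩
    have e2 := hρU (Q.tgt a) ⟨f a u, hU a u hu⟩
    simp only at e1 e2
    rw [map_add, map_add, map_add, hρW _ _ (hW a w hw), hρW _ _ hw, e1, e2]
    simp [resRep, LinearMap.restrict_apply]
  have hψend : ∀ a v, ρ0 (Q.tgt a) (θ (Q.tgt a) (f a v)) =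
      resRep f U hU a (ρ0 (Q.src a) (θ (Q.src a) v)) := by
    intro a v
    rw [hθ a v, hcomm]
    exact hsq _ _
  let ψ : ∀ i, X i →ₗ[F] U i := fun i => ρ0 i ∘ₗ θ i
  have hψker : ∀ i, LinearMap.ker (ψ i) = LinearMap.ker (θ i) := by
    let ψ' : ∀ i, X i →ₗ[F] X i := fun i => (U i).subtype ∘ₗ ψ i
    have hE : IsEnd f ψ' := by
      intro a v
      have := congrArg Subtype.val (hψend a v)
      simpa [ψ', ψ, resRep, LinearMap.restrict_apply] using this
    have hker' : ∀ i, LinearMap.ker (ψ' i) = LinearMap.ker (ψ i) := fun i =>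
      LinearMap.ker_comp_of_ker_eq_bot _ (by simp)
    have hle : ∀ i, LinearMap.ker (θ i) ≤ LinearMap.ker (ψ' i) := by
      intro i v hv
      rw [LinearMap.mem_ker] at *
      simp [ψ', ψ, hv]
    have hne : ψ' ≠ 0 := by
      intro h
      apply hi0
      rintro _ ⟨v, rfl⟩
      have h1 : ψ' i0 v = 0 := by rw [h]; rfl
      have h2 : ρ0 i0 (θ i0 v) = 0 := by
        simpa [ψ', ψ] using h1
      have h3 : θ i0 v ∈ LinearMap.ker (θ i0) := hsq _ _
      rw [← hUW] at h3
      obtain ⟨u, hu, w, hw, h4⟩ := Submodule.mem_sup.1 h3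
      rw [← h4, map_add, hρW _ _ hw, add_zero] at h2
      have h5 := hρU i0 ⟨u, hu⟩
      simp only at h5
      rw [h5] at h2
      have h6 : u = 0 := congrArg Subtype.val h2
      rw [← h4, h6, zero_add]
      exact hw
    have h1 := hmin ψ' hE hne
    intro i
    rw [← hker']
    symm
    have h2 : ∀ i, finrank F (LinearMap.range (ψ' i)) = finrank F (LinearMap.range (θ i)) := by
      refine eq_of_sum_le (fun i => ?_) h1
      have e1 := LinearMap.finrank_range_add_finrank_ker (ψ' i)
      have e2 := LinearMap.finrank_range_add_finrank_ker (θ i)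
      have e3 := Submodule.finrank_mono (hle i)
      omega
    apply Submodule.eq_of_le_of_finrank_eq (hle i)
    have e1 := LinearMap.finrank_range_add_finrank_ker (ψ' i)
    have e2 := LinearMap.finrank_range_add_finrank_ker (θ i)
    have e3 := h2 i
    omega
  -- factor the defect of ρ0 through ψ
  have hfac : ∀ a, ∃ c : U (Q.src a) →ₗ[F] U (Q.tgt a),
      c ∘ₗ ψ (Q.src a) = resRep f U hU a ∘ₗ ρ0 (Q.src a) - ρ0 (Q.tgt a) ∘ₗ f a := by
    intro a
    apply exists_factor
    intro v hv
    rw [hψker] at hv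
    rw [LinearMap.mem_ker, LinearMap.sub_apply, LinearMap.comp_apply, LinearMap.comp_apply,
      hcomm a v hv, sub_self]
  choose c hc using hfac
  obtain ⟨h, hh⟩ := hsurj c
  have hh' : ∀ a u, resRep f U hU a (h (Q.src a) u) - h (Q.tgt a) (resRep f U hU a u) = c a u := by
    intro a u
    rw [← hh]; rfl
  let ρ : ∀ i, X i →ₗ[F] U i := fun i => ρ0 i - h i ∘ₗ ψ i
  have hρend : ∀ a v, ρ (Q.tgt a) (f a v) = resRep f U hU a (ρ (Q.src a) v) := by
    intro a v
    have e1 := LinearMap.congr_fun (hc a) v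
    simp only [LinearMap.comp_apply, LinearMap.sub_apply] at e1
    rw [← hh' a] at e1
    have e2 := hψend a v
    have e2' : ψ (Q.tgt a) (f a v) = resRep f U hU a (ψ (Q.src a) v) := e2
    simp only [ρ, LinearMap.sub_apply, LinearMap.comp_apply, map_sub]
    rw [e2']
    rw [sub_eq_sub_iff_add_eq_add] at e1 ⊢
    rw [add_comm, e1, add_comm]
  have hρid : ∀ i (u : U i), ρ i u = u := by
    intro i u
    have e1 : (u : X i) ∈ LinearMap.ker (ψ i) := by rw [hψker]; exact hUk i u.2
    rw [LinearMap.mem_ker] at e1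
    simp [ρ, e1, hρU]
  have hsubker : IsSub f (fun i => LinearMap.ker (ρ i)) := by
    intro a v hv
    rw [LinearMap.mem_ker] at *
    rw [hρend, hv, map_zero]
  have hcompl : ∀ i, IsCompl (U i) (LinearMap.ker (ρ i)) := fun i =>
    LinearMap.isCompl_of_proj (hρid i)
  rcases hf.2 U _ hU hsubker hcompl with h1 | h1
  · exact hUbot h1
  · obtain ⟨i, hi⟩ := hUtop
    apply hi
    have := (hcompl i).sup_eq_top
    rwa [h1 i, sup_bot_eq] at this

end General
end Kac

namespace Kac
open Module

section General2
universe u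
variable {Q : FinQuiver} {F : Type*} [Field F]
variable {X : Q.V → Type u} [∀ i, AddCommGroup (X i)] [∀ i, Module F (X i)]

/-- The endomorphism algebra of a representation. -/
def EndAlg (f : ∀ a, X (Q.src a) →ₗ[F] X (Q.tgt a)) : Subalgebra F (∀ i, Module.End F (X i)) where
  carrier := {φ | IsEnd f φ}
  mul_mem' := by
    intro φ ψ hφ hψ a v
    change φ _ (ψ _ (f a v)) = f a (φ _ (ψ _ v))
    rw [hψ a v, hφ a]
  add_mem' := by
    intro φ ψ hφ hψ a v
    change φ _ (f a v) + ψ _ (f a v) = f a (φ _ v + ψ _ v)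
    rw [hψ a v, hφ a, map_add]
  algebraMap_mem' := by
    intro r a v
    change r • (f a v) = f a (r • v)
    rw [map_smul]

theorem finrank_endAlg (f : ∀ a, X (Q.src a) →ₗ[F] X (Q.tgt a)) :
    finrank F (EndAlg f) = finrank F (LinearMap.ker (dmap f)) := by
  have : Subalgebra.toSubmodule (EndAlg f) = LinearMap.ker (dmap f) := by
    ext φ
    rw [mem_ker_dmap]; rfl
  rw [← this]; rfl

variable [∀ i, FiniteDimensional F (X i)]

theorem finrank_endAlg_dvd (f : ∀ a, X (Q.src a) →ₗ[F] X (Q.tgt a))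
    (h : ∀ φ, IsEnd f φ → φ ≠ 0 → ∀ i, LinearMap.ker (φ i) = ⊥)
    (hX : ∃ i, ∃ v : X i, v ≠ 0) (i : Q.V) :
    finrank F (EndAlg f) ∣ finrank F (X i) := by
  have hnt : Nontrivial (EndAlg f) := by
    refine ⟨0, 1, ?_⟩
    intro h01
    obtain ⟨j, v, hv⟩ := hX
    apply hv
    have h1 : (0 : ∀ i, Module.End F (X i)) = 1 := congrArg Subtype.val h01
    have h2 : (0 : Module.End F (X j)) v = (1 : Module.End F (X j)) v :=
      LinearMap.congr_fun (congr_fun h1 j) v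
    simpa using h2.symm
  have hu : ∀ φ : EndAlg f, IsUnit φ ∨ φ = 0 := by
    intro φ
    by_cases h0 : φ = 0
    · exact Or.inr h0
    left
    have hk := h φ.1 φ.2 (fun hh => h0 (Subtype.ext hh))
    have hinj : Function.Injective (LinearMap.mulLeft F φ) := by
      rw [← LinearMap.ker_eq_bot, LinearMap.ker_eq_bot']
      intro ψ hψ
      apply Subtype.ext
      funext j
      ext v
      have h1 : φ.1 j (ψ.1 j v) = 0 := LinearMap.congr_fun (congr_fun (congrArg Subtype.val hψ) j) v
      exact (LinearMap.ker_eq_bot'.1 (hk j)) _ h1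
    have hfin : FiniteDimensional F (EndAlg f) := inferInstance
    have hsurj := LinearMap.injective_iff_surjective.1 hinj
    obtain ⟨ψ, hψ⟩ := hsurj 1
    have hψ' : φ * ψ = 1 := hψ
    have hψ2 : ψ * φ = 1 := by
      apply hinj
      change φ * (ψ * φ) = φ * 1
      rw [← mul_assoc, hψ', one_mul, mul_one]
    exact ⟨⟨φ, ψ, hψ', hψ2⟩, rfl⟩
  let : DivisionRing (EndAlg f) := DivisionRing.ofIsUnitOrEqZero hu
  let ev : EndAlg f →+* Module.End F (X i) :=
    (Pi.evalRingHom (fun i => Module.End F (X i)) i).comp (EndAlg f).val.toRingHom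
  let : Module (EndAlg f) (X i) := Module.compHom (X i) ev
  have : IsScalarTower F (EndAlg f) (X i) := by
    constructor
    intro c φ v
    rfl
  exact ⟨_, (Module.finrank_mul_finrank F (EndAlg f) (X i)).symm⟩

theorem tits_eq (f : ∀ a, X (Q.src a) →ₗ[F] X (Q.tgt a)) :
    Q.titsForm (fun i => (finrank F (X i) : ℤ)) =
      finrank F (EndAlg f) -
        ((∑ a, finrank F (X (Q.src a)) * finrank F (X (Q.tgt a)) : ℕ) -
          (finrank F (LinearMap.range (dmap f)) : ℤ)) := by
  have h := LinearMap.finrank_range_add_finrank_ker (dmap f)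
  rw [Module.finrank_pi_fintype] at h
  simp only [Module.finrank_linearMap] at h
  rw [finrank_endAlg]
  have h' : ((∑ i, finrank F (X i) * finrank F (X i) : ℕ) : ℤ) =
    finrank F (LinearMap.range (dmap f)) + finrank F (LinearMap.ker (dmap f)) := by
    rw [← h]; push_cast; rfl
  simp only [FinQuiver.titsForm, FinQuiver.eulerForm]
  push_cast at h' ⊢
  rw [h']; ring

theorem range_le (f : ∀ a, X (Q.src a) →ₗ[F] X (Q.tgt a)) :
    finrank F (LinearMap.range (dmap f)) ≤
      ∑ a, finrank F (X (Q.src a)) * finrank F (X (Q.tgt a)) := by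
  have h := Submodule.finrank_le (LinearMap.range (dmap f))
  rw [Module.finrank_pi_fintype] at h
  simpa only [Module.finrank_linearMap] using h

theorem range_top (f : ∀ a, X (Q.src a) →ₗ[F] X (Q.tgt a))
    (h : ∑ a, finrank F (X (Q.src a)) * finrank F (X (Q.tgt a)) ≤
      finrank F (LinearMap.range (dmap f))) : Function.Surjective (dmap f) := by
  rw [← LinearMap.range_eq_top]
  apply Submodule.eq_top_of_finrank_eq
  apply le_antisymm (Submodule.finrank_le _)
  rw [Module.finrank_pi_fintype]
  simpa only [Module.finrank_linearMap] using h

end General2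

section Affine
universe u
variable {F : Type*} [Field F]

theorem schur (Q : AffineQuiver)
    {X : Q.V → Type u} [∀ i, AddCommGroup (X i)] [∀ i, Module F (X i)]
    [∀ i, FiniteDimensional F (X i)] (f : ∀ a, X (Q.src a) →ₗ[F] X (Q.tgt a))
    (h : ∀ φ, IsEnd (Q := Q.toFinQuiver) f φ → φ ≠ 0 → ∀ i, LinearMap.ker (φ i) = ⊥)
    (hX : ∃ i, ∃ v : X i, v ≠ 0) (hle : ∀ i, (finrank F (X i) : ℤ) ≤ Q.δ i) :
    finrank F (EndAlg (Q := Q.toFinQuiver) f) = 1 ∧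
    ((∃ i, (finrank F (X i) : ℤ) ≠ Q.δ i) → Function.Surjective (dmap (Q := Q.toFinQuiver) f)) := by
  set s := finrank F (EndAlg (Q := Q.toFinQuiver) f) with hs
  have hdvd := finrank_endAlg_dvd (Q := Q.toFinQuiver) f h hX
  obtain ⟨j, v, hv⟩ := hX
  have hpos : 0 < finrank F (X j) := by
    rw [Module.finrank_pos_iff]; exact ⟨v, 0, hv⟩
  have hspos : 0 < s := Nat.pos_of_dvd_of_pos (hdvd j) hpos
  have ht := tits_eq (Q := Q.toFinQuiver) f
  have hr := range_le (Q := Q.toFinQuiver) f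
  rw [← hs] at ht
  by_cases hd : ∀ i, (finrank F (X i) : ℤ) = Q.δ i
  · refine ⟨?_, fun ⟨i, hi⟩ => absurd (hd i) hi⟩
    have := delta_prim Q (s := s) (by exact_mod_cast hspos) (fun i => by
      rw [← hd i]; exact_mod_cast hdvd i)
    exact_mod_cast this
  · push Not at hd
    have h1 : 1 ≤ Q.titsForm (fun i => (finrank F (X i) : ℤ)) := by
      apply tits_pos Q (fun i => by positivity) hle
      · intro hh
        have := congr_fun hh j
        simp at this
        omega
      · intro hh
        obtain ⟨i, hi⟩ := hd
        exact hi (congr_fun hh i)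
    choose y hy using hdvd
    have h2 : Q.titsForm (fun i => (finrank F (X i) : ℤ)) = (s:ℤ) ^ 2 * Q.titsForm (fun i => (y i : ℤ)) := by
      rw [← tits_smul]
      congr 1
      funext i
      exact_mod_cast hy i
    have h3 : 1 ≤ Q.titsForm (fun i => (y i : ℤ)) := by
      by_contra hcon
      push Not at hcon
      nlinarith [sq_nonneg (s : ℤ)]
    have h4 : Q.titsForm (fun i => (finrank F (X i) : ℤ)) ≤ s := by
      rw [ht]; zify at hr; push_cast; linarith
    have h5 : s = 1 := by
      zify at hspos ⊢
      nlinarith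
    refine ⟨h5, fun _ => range_top (Q := Q.toFinQuiver) f ?_⟩
    zify
    rw [h5] at ht
    push_cast at ht
    linarith

theorem brick_aux (Q : AffineQuiver) : ∀ n : ℕ,
    ∀ (X : Q.V → Type u) [∀ i, AddCommGroup (X i)] [∀ i, Module F (X i)]
    [∀ i, FiniteDimensional F (X i)] (f : ∀ a, X (Q.src a) →ₗ[F] X (Q.tgt a)),
    Indec (Q := Q.toFinQuiver) f → (∀ i, (finrank F (X i) : ℤ) ≤ Q.δ i) →
    ∑ i, finrank F (X i) = n →
    finrank F (EndAlg (Q := Q.toFinQuiver) f) = 1 ∧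
    ((∃ i, (finrank F (X i) : ℤ) ≠ Q.δ i) → Function.Surjective (dmap (Q := Q.toFinQuiver) f)) := by
  intro n
  induction n using Nat.strong_induction_on with
  | _ n ih =>
    intro X _ _ _ f hf hle hn
    refine schur Q f (fun φ hφ hφ0 => ?_) hf.1 hle
    refine ringel (Q := Q.toFinQuiver) hf (fun U hU hUt hUi => ?_) φ hφ hφ0
    obtain ⟨j, hj⟩ := hUt
    have hlt : finrank F (U j) < finrank F (X j) := Submodule.finrank_lt hj
    refine (ih (∑ i, finrank F (U i)) ?_ (fun i => U i) (resRep f U hU) hUi (fun i => ?_) rfl).2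
      ⟨j, ?_⟩
    · rw [← hn]
      exact Finset.sum_lt_sum (fun i _ => Submodule.finrank_le _) ⟨j, Finset.mem_univ _, hlt⟩
    · refine le_trans ?_ (hle i)
      exact_mod_cast Submodule.finrank_le _
    · have := hle j
      zify at hlt
      exact (lt_of_lt_of_le hlt this).ne

/-- Indecomposable representations of dimension at most `δ` have only scalar endomorphisms. -/
theorem brick (Q : AffineQuiver)
    {X : Q.V → Type u} [∀ i, AddCommGroup (X i)] [∀ i, Module F (X i)]
    [∀ i, FiniteDimensional F (X i)] (f : ∀ a, X (Q.src a) →ₗ[F] X (Q.tgt a))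
    (hf : Indec (Q := Q.toFinQuiver) f) (hle : ∀ i, (finrank F (X i) : ℤ) ≤ Q.δ i)
    (φ : ∀ i, X i →ₗ[F] X i) (hφ : IsEnd (Q := Q.toFinQuiver) f φ) :
    ∃ c : F, ∀ i v, φ i v = c • v := by
  have h1 := (brick_aux Q _ X f hf hle rfl).1
  have hne : (1 : EndAlg (Q := Q.toFinQuiver) f) ≠ 0 := by
    intro h
    obtain ⟨j, v, hv⟩ := hf.1
    apply hv
    exact LinearMap.congr_fun (congr_fun (congrArg Subtype.val h) j) v
  obtain ⟨c, hc⟩ := (finrank_eq_one_iff_of_nonzero' _ hne).1 h1 ⟨φ, hφ⟩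
  refine ⟨c, fun i v => ?_⟩
  exact (LinearMap.congr_fun (congr_fun (congrArg Subtype.val hc) i) v).symm

end Affine
end Kac

namespace Kac
open Module

section Mat
variable {Q : FinQuiver} {k : Type} [Field k] {d : Q.V → ℕ}

/-- Matrix endomorphisms. -/
def MEnd (x : MRep Q k d) (e : ∀ i, Matrix (Fin (d i)) (Fin (d i)) k) : Prop :=
  ∀ a, e (Q.tgt a) * x a = x a * e (Q.src a)

/-- The linear maps of a matrix representation. -/
def linRep (x : MRep Q k d) : ∀ a, (Fin (d (Q.src a)) → k) →ₗ[k] (Fin (d (Q.tgt a)) → k) :=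
  fun a => (x a).mulVecLin

theorem indec_lin {x : MRep Q k d} (hx : MIndec x) :
    Indec (X := fun i => Fin (d i) → k) (linRep x) := by
  obtain ⟨⟨i, hi⟩, h⟩ := hx
  refine ⟨⟨i, fun _ => 1, ?_⟩, ?_⟩
  · intro h0
    have := congr_fun h0 ⟨0, hi⟩
    simp at this
  · intro U W hU hW hUW
    exact h U W hU hW hUW

theorem mEnd_isEnd {x : MRep Q k d} {e : ∀ i, Matrix (Fin (d i)) (Fin (d i)) k} (he : MEnd x e) :
    IsEnd (X := fun i => Fin (d i) → k) (linRep x) (fun i => (e i).mulVecLin) := by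
  intro a v
  simp only [linRep, Matrix.mulVecLin_apply, Matrix.mulVec_mulVec, he a]

/-- all endomorphisms are scalars -/
def Scal (x : MRep Q k d) : Prop :=
  ∀ e, MEnd x e → ∃ c : k, ∀ i, e i = c • (1 : Matrix (Fin (d i)) (Fin (d i)) k)

theorem indec_of_idem {x : MRep Q k d} (hd : ∃ i, 0 < d i)
    (h : ∀ e, MEnd x e → (∀ i, e i * e i = e i) → (∀ i, e i = 0) ∨ (∀ i, e i = 1)) :
    MIndec x := by
  refine ⟨hd, fun U W hU hW hUW => ?_⟩
  let P : ∀ i, (Fin (d i) → k) →ₗ[k] (Fin (d i) → k) := fun i =>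
    (U i).subtype ∘ₗ Submodule.projectionOnto (U i) (W i) (hUW i)
  have hPU : ∀ i, ∀ u ∈ U i, P i u = u := by
    intro i u hu
    have := Submodule.projectionOnto_apply_left (hUW i) ⟨u, hu⟩
    exact congrArg Subtype.val this
  have hPW : ∀ i, ∀ w ∈ W i, P i w = 0 := by
    intro i u hu
    have := Submodule.projectionOnto_apply_of_mem_right (hUW i) hu
    exact congrArg Subtype.val this
  have hdec : ∀ i (v : Fin (d i) → k), ∃ u ∈ U i, ∃ w ∈ W i, u + w = v := by
    intro i v
    have : v ∈ U i ⊔ W i := by rw [(hUW i).sup_eq_top]; trivial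
    exact Submodule.mem_sup.1 this
  let e : ∀ i, Matrix (Fin (d i)) (Fin (d i)) k := fun i => LinearMap.toMatrix' (P i)
  have heP : ∀ i v, (e i).mulVec v = P i v := fun i v => LinearMap.toMatrix'_mulVec _ _
  have hE : MEnd x e := by
    intro a
    apply Matrix.ext_of_mulVec_single
    intro j
    generalize (Pi.single j 1 : Fin (d (Q.src a)) → k) = v
    rw [← Matrix.mulVec_mulVec, ← Matrix.mulVec_mulVec, heP, heP]
    obtain ⟨u, hu, w, hw, rfl⟩ := hdec _ v
    rw [Matrix.mulVec_add, map_add, map_add, hPU _ u hu, hPW _ w hw, hPU _ _ (hU a u hu),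
      hPW _ _ (hW a w hw), add_zero, add_zero]
  have hI : ∀ i, e i * e i = e i := by
    intro i
    apply Matrix.ext_of_mulVec_single
    intro j
    rw [← Matrix.mulVec_mulVec, heP, heP]
    exact hPU i _ (Submodule.coe_mem _)
  rcases h e hE hI with h | h
  · left
    intro i
    rw [eq_bot_iff]
    intro u hu
    have := hPU i u hu
    rw [← heP, h i, Matrix.zero_mulVec] at this
    simp [← this]
  · right
    intro i
    rw [eq_bot_iff]
    intro u hu
    have := hPW i u hu
    rw [← heP, h i, Matrix.one_mulVec] at this
    simp [this]

theorem idem_of_indec {x : MRep Q k d} (hx : MIndec x)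
    (e : ∀ i, Matrix (Fin (d i)) (Fin (d i)) k) (he : MEnd x e) (hi : ∀ i, e i * e i = e i) :
    (∀ i, e i = 0) ∨ (∀ i, e i = 1) := by
  have hc : ∀ i (v : Fin (d i) → k), (e i).mulVec ((e i).mulVec v) = (e i).mulVec v := by
    intro i v; rw [Matrix.mulVec_mulVec, hi]
  have hr1 : MSub x (fun i => LinearMap.range (e i).mulVecLin) :=
    isSub_range (X := fun i => Fin (d i) → k) (f := linRep x)
      (φ := fun i => (e i).mulVecLin) (mEnd_isEnd he)
  have hr2 : MSub x (fun i => LinearMap.ker (e i).mulVecLin) :=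
    isSub_ker (X := fun i => Fin (d i) → k) (f := linRep x)
      (φ := fun i => (e i).mulVecLin) (mEnd_isEnd he)
  rcases hx.2 (fun i => LinearMap.range (e i).mulVecLin) (fun i => LinearMap.ker (e i).mulVecLin)
    hr1 hr2 (by
      intro i
      refine ⟨?_, ?_⟩
      · rw [disjoint_iff, eq_bot_iff]
        rintro _ ⟨⟨v, rfl⟩, h⟩
        simp only [SetLike.mem_coe, LinearMap.mem_ker, Matrix.mulVecLin_apply, hc] at h ⊢
        simpa using h
      · rw [codisjoint_iff, eq_top_iff]
        intro v _
        rw [Submodule.mem_sup]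
        refine ⟨(e i).mulVec v, ⟨v, rfl⟩, v - (e i).mulVec v, ?_, by abel⟩
        rw [LinearMap.mem_ker, Matrix.mulVecLin_apply, Matrix.mulVec_sub, hc, sub_self]) with h | h
  · left
    intro i
    have := LinearMap.range_eq_bot.1 (h i)
    apply Matrix.ext_of_mulVec_single
    intro j
    rw [Matrix.zero_mulVec]
    exact LinearMap.congr_fun this (Pi.single j 1)
  · right
    intro i
    apply Matrix.ext_of_mulVec_single
    intro j
    have := LinearMap.ker_eq_bot.1 (h i)
    apply this
    simp only [Matrix.mulVecLin_apply, hc, Matrix.one_mulVec]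

theorem indec_of_scal {x : MRep Q k d} (hd : ∃ i, 0 < d i) (h : Scal x) : MIndec x := by
  refine indec_of_idem hd fun e he hi => ?_
  obtain ⟨c, hc⟩ := h e he
  obtain ⟨i, h0⟩ := hd
  have h1 := congr_fun (congr_fun (hi i) ⟨0, h0⟩) ⟨0, h0⟩
  rw [hc i] at h1
  simp only [Matrix.smul_mul, Matrix.one_mul, Matrix.smul_apply, Matrix.one_apply_eq,
    smul_eq_mul, mul_one] at h1
  have : c * (c - 1) = 0 := by rw [mul_sub, h1]; simp
  rcases mul_eq_zero.1 this with h | h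
  · left; intro j; rw [hc j, h, zero_smul]
  · right; intro j; rw [hc j, sub_eq_zero.1 h, one_smul]

theorem scal_map {x : MRep Q k d} (hd : ∃ i, 0 < d i) (h : Scal x) (K : Type) [Field K]
    [Algebra k K] : Scal (mapRep K x) := by
  intro E hE
  obtain ⟨i0, h0⟩ := hd
  refine ⟨E i0 ⟨0, h0⟩ ⟨0, h0⟩, fun i => ?_⟩
  ext r s
  rw [← sub_eq_zero, ← Module.forall_dual_apply_eq_zero_iff k]
  intro l
  have hl : MEnd x (fun i => (E i).map l) := by
    intro a
    ext r s
    have := congrArg l (congr_fun (congr_fun (hE a) r) s)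
    simp only [Matrix.mul_apply, mapRep, Matrix.map_apply, map_sum] at this ⊢
    refine Eq.trans (Finset.sum_congr rfl fun j _ => ?_) (this.trans (Finset.sum_congr rfl fun j _ => ?_))
    · rw [mul_comm (E _ _ _), ← Algebra.smul_def, map_smul, smul_eq_mul, mul_comm]
    · rw [← Algebra.smul_def, map_smul, smul_eq_mul]
  obtain ⟨c, hc⟩ := h _ hl
  have e1 := congr_fun (congr_fun (hc i0) ⟨0, h0⟩) ⟨0, h0⟩
  have e2 := congr_fun (congr_fun (hc i) r) s
  simp only [Matrix.map_apply, Matrix.smul_apply, Matrix.one_apply_eq, smul_eq_mul, mul_one] at e1 e2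
  rw [map_sub, e2, Matrix.smul_apply, Matrix.one_apply, Matrix.one_apply]
  split_ifs <;> simp [e1]

theorem indec_of_map {x : MRep Q k d} (K : Type) [Field K] [Algebra k K]
    (h : MIndec (mapRep K x)) : MIndec x := by
  refine indec_of_idem h.1 fun e he hi => ?_
  have inj : Function.Injective (algebraMap k K) := (algebraMap k K).injective
  rcases idem_of_indec h (fun i => (e i).map (algebraMap k K)) (fun a => by
      simp only [mapRep, ← Matrix.map_mul, he a]) (fun i => by
      rw [← Matrix.map_mul, hi]) with h | h
  · left
    intro i
    apply Matrix.map_injective inj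
    refine (h i).trans ?_
    simp
  · right
    intro i
    apply Matrix.map_injective inj
    refine (h i).trans ?_
    simp

theorem miso_iff {x y : MRep Q k d} : MIso x y ↔ ∃ g : ∀ i, GL (Fin (d i)) k, ∀ a,
    y a * (g (Q.src a)).1 = (g (Q.tgt a)).1 * x a := by
  constructor
  · rintro ⟨g, hg⟩
    refine ⟨g, fun a => ?_⟩
    rw [hg a, Matrix.mul_assoc, ← Units.val_mul, inv_mul_cancel, Units.val_one, Matrix.mul_one]
  · rintro ⟨g, hg⟩
    refine ⟨g, fun a => ?_⟩
    rw [← hg a, Matrix.mul_assoc, ← Units.val_mul, mul_inv_cancel, Units.val_one, Matrix.mul_one]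

/-- The action of the general linear group. -/
def gact (g : ∀ i, GL (Fin (d i)) k) (x : MRep Q k d) : MRep Q k d :=
  fun a => ((g (Q.tgt a)).1 * x a) * ((g (Q.src a))⁻¹).1

theorem gact_mul (g h : ∀ i, GL (Fin (d i)) k) (x : MRep Q k d) :
    gact (g * h) x = gact g (gact h x) := by
  funext a
  simp only [gact, Pi.mul_apply, mul_inv_rev, Units.val_mul, Matrix.mul_assoc]

theorem gact_one (x : MRep Q k d) : gact 1 x = x := by
  funext a
  simp [gact]

theorem miso_iff_gact {x y : MRep Q k d} : MIso x y ↔ ∃ g, y = gact g x := by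
  constructor
  · rintro ⟨g, hg⟩; exact ⟨g, funext hg⟩
  · rintro ⟨g, hg⟩; exact ⟨g, fun a => congr_fun hg a⟩

theorem miso_equiv : Equivalence (MIso (Q := Q) (k := k) (d := d)) := by
  refine ⟨fun x => ?_, fun {x y} h => ?_, fun {x y z} h1 h2 => ?_⟩ <;>
    simp only [miso_iff_gact] at *
  · exact ⟨1, (gact_one x).symm⟩
  · obtain ⟨g, rfl⟩ := h
    exact ⟨g⁻¹, by rw [← gact_mul, inv_mul_cancel, gact_one]⟩
  · obtain ⟨g, rfl⟩ := h1
    obtain ⟨h, rfl⟩ := h2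
    exact ⟨h * g, by rw [gact_mul]⟩

theorem gact_eq_self {g : ∀ i, GL (Fin (d i)) k} {x : MRep Q k d} (h : gact g x = x) :
    MEnd x (fun i => (g i).1) := by
  intro a
  have := congr_fun h a
  simp only [gact] at this
  conv_rhs => rw [← this]
  rw [Matrix.mul_assoc _ _ (g (Q.src a)).1, ← Units.val_mul, inv_mul_cancel, Units.val_one,
    Matrix.mul_one]

theorem indec_gact {g : ∀ i, GL (Fin (d i)) k} {x : MRep Q k d} (h : MIndec x) :
    MIndec (gact g x) := by
  refine indec_of_idem h.1 fun e he hi => ?_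
  have key : ∀ i, (g i).1 * ((g i)⁻¹).1 = 1 := fun i => by
    rw [← Units.val_mul, mul_inv_cancel, Units.val_one]
  have key2 : ∀ i, ((g i)⁻¹).1 * (g i).1 = 1 := fun i => by
    rw [← Units.val_mul, inv_mul_cancel, Units.val_one]
  have conj : ∀ i, (g i).1 * (((g i)⁻¹).1 * e i * (g i).1) * ((g i)⁻¹).1 = e i := by
    intro i
    rw [← Matrix.mul_assoc, ← Matrix.mul_assoc, key, Matrix.one_mul, Matrix.mul_assoc, key,
      Matrix.mul_one]
  rcases idem_of_indec h (fun i => ((g i)⁻¹).1 * e i * (g i).1) (fun a => by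
      have := he a
      simp only [gact] at this
      have h2 := congrArg (fun m => ((g (Q.tgt a))⁻¹).1 * m * (g (Q.src a)).1) this
      simp only [Matrix.mul_assoc] at h2 ⊢
      rw [key2, Matrix.mul_one] at h2
      rw [h2, ← Matrix.mul_assoc ((g (Q.tgt a))⁻¹).1 (g (Q.tgt a)).1, key2, Matrix.one_mul])
    (fun i => by
      calc ((g i)⁻¹).1 * e i * (g i).1 * (((g i)⁻¹).1 * e i * (g i).1)
          = ((g i)⁻¹).1 * e i * ((g i).1 * ((g i)⁻¹).1) * e i * (g i).1 := by
            simp only [Matrix.mul_assoc]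
        _ = ((g i)⁻¹).1 * e i * (g i).1 := by
            rw [key, Matrix.mul_one, Matrix.mul_assoc _ (e i) (e i), hi]) with h | h
  · left
    intro i
    rw [← conj i, h i]; simp
  · right
    intro i
    rw [← conj i, h i]; simp

end Mat

section Count
variable {Q : FinQuiver} {k : Type} [Field k] [Fintype k] {d : Q.V → ℕ}

theorem card_indec (hd : ∃ i, 0 < d i) (hs : ∀ x : MRep Q k d, MIndec x → Scal x) :
    Nat.card {x : MRep Q k d // MIndec x} * (Fintype.card k - 1) =
      Nat.card (Quot (fun x y : {x : MRep Q k d // MIndec x} => MIso x.1 y.1)) *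
        Nat.card (∀ i, GL (Fin (d i)) k) := by
  classical
  let r : {x : MRep Q k d // MIndec x} → {x : MRep Q k d // MIndec x} → Prop :=
    fun x y => MIso x.1 y.1
  have hr : Equivalence r := ⟨fun x => miso_equiv.refl _, fun h => miso_equiv.symm h,
    fun h1 h2 => miso_equiv.trans h1 h2⟩
  change _ = Nat.card (Quot r) * _
  have hex : ∀ x : {x : MRep Q k d // MIndec x}, ∃ g, x.1 = gact g (Quot.out (Quot.mk r x)).1 := by
    intro x
    rw [← miso_iff_gact]
    have : Quot.mk r (Quot.out (Quot.mk r x)) = Quot.mk r x := Quot.out_eq _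
    exact (hr.eqvGen_iff.1 (Quot.eqvGen_exact this))
  choose g hg using hex
  let sc : kˣ → ∀ i, GL (Fin (d i)) k := fun c i => Units.map (algebraMap k (Matrix (Fin (d i)) (Fin (d i)) k)).toMonoidHom c
  have hsc : ∀ c x, gact (sc c) x = (x : MRep Q k d) := by
    intro c x
    funext a
    have h1 : ((sc c (Q.src a))⁻¹).1 = algebraMap k _ ((c⁻¹ : kˣ) : k) := rfl
    have h2 : (sc c (Q.tgt a)).1 = algebraMap k _ (c : k) := rfl
    simp only [gact, h1, h2, Algebra.algebraMap_eq_smul_one]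
    simp [smul_smul]
  obtain ⟨i0, h0⟩ := hd
  let Φ : {x : MRep Q k d // MIndec x} × kˣ → Quot r × (∀ i, GL (Fin (d i)) k) :=
    fun p => (Quot.mk r p.1, g p.1 * sc p.2)
  have hΦ : Function.Bijective Φ := by
    constructor
    · rintro ⟨x, c⟩ ⟨y, c'⟩ h
      simp only [Φ, Prod.mk.injEq] at h
      obtain ⟨h1, h2⟩ := h
      have hxy : x = y := by
        apply Subtype.ext
        rw [hg x, hg y, ← h1]
        have := congrArg (fun g => gact g (Quot.out (Quot.mk r x)).1) h2
        simpa only [gact_mul, hsc] using this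
      subst hxy
      have h3 := mul_left_cancel h2
      have h4 := congrArg (fun m => m.1 ⟨0, h0⟩ ⟨0, h0⟩) (congr_fun h3 i0)
      have h5 : ∀ c, (sc c i0).1 ⟨0, h0⟩ ⟨0, h0⟩ = (c : k) := by
        intro c
        have h2 : (sc c i0).1 = algebraMap k _ (c : k) := rfl
        rw [h2, Algebra.algebraMap_eq_smul_one]; simp
      simp only [h5] at h4
      rw [Units.ext h4]
    · rintro ⟨c, h⟩
      let x : {x : MRep Q k d // MIndec x} := ⟨gact h (Quot.out c).1, indec_gact (Quot.out c).2⟩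
      have hx : Quot.mk r x = c := by
        conv_rhs => rw [← Quot.out_eq c]
        apply Quot.sound
        exact miso_equiv.symm (miso_iff_gact.2 ⟨h, rfl⟩)
      have h1 : gact h (Quot.out c).1 = gact (g x) (Quot.out c).1 := by
        have := hg x
        rwa [hx] at this
      have h2 : gact ((g x)⁻¹ * h) (Quot.out c).1 = (Quot.out c).1 := by
        rw [gact_mul, h1, ← gact_mul, inv_mul_cancel, gact_one]
      obtain ⟨l, hl⟩ := hs _ (Quot.out c).2 _ (gact_eq_self h2)
      have hl0 : l ≠ 0 := by
        rintro rfl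
        have e1 := hl i0
        rw [zero_smul] at e1
        have e2 := (((g x)⁻¹ * h) i0).mul_inv
        rw [e1, Matrix.zero_mul] at e2
        have := congr_fun (congr_fun e2 ⟨0, h0⟩) ⟨0, h0⟩
        simp at this
      refine ⟨(x, Units.mk0 l hl0), ?_⟩
      simp only [Φ, Prod.mk.injEq]
      refine ⟨hx, ?_⟩
      rw [← eq_inv_mul_iff_mul_eq]
      funext i
      apply Units.ext
      rw [hl i]
      change algebraMap k _ l = _
      rw [Algebra.algebraMap_eq_smul_one]
  have := Nat.card_congr (Equiv.ofBijective Φ hΦ)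
  rw [Nat.card_prod, Nat.card_prod] at this
  rw [← this, Nat.card_eq_fintype_card (α := kˣ), Fintype.card_units]

end Count

theorem scal_of_indec (Q : AffineQuiver) {k : Type} [Field k] {d : Q.V → ℕ}
    (hd : ∀ i, (d i : ℤ) ≤ Q.δ i) (x : MRep Q.toFinQuiver k d) (hx : MIndec x) : Scal x := by
  intro e he
  obtain ⟨c, hc⟩ := brick Q (X := fun i => Fin (d i) → k) (linRep x) (indec_lin hx) (by simpa using hd)
    _ (mEnd_isEnd he)
  refine ⟨c, fun i => ?_⟩
  apply Matrix.ext_of_mulVec_single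
  intro j
  have := hc i (Pi.single j 1)
  rw [Matrix.mulVecLin_apply] at this
  rw [this, Matrix.smul_mulVec, Matrix.one_mulVec]
end Kac

namespace Kac
open Module

section Frob
variable {Q : FinQuiver} {K : Type} [Field K] {d : Q.V → ℕ}

/-- Entrywise action of a field automorphism. -/
def sact (σ : K ≃+* K) (x : MRep Q K d) : MRep Q K d := fun a => (x a).map σ

theorem indec_sact (σ : K ≃+* K) {x : MRep Q K d} (h : MIndec x) : MIndec (sact σ x) := by
  refine indec_of_idem h.1 fun e he hi => ?_
  have inj : Function.Injective (σ.symm) := σ.symm.injective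
  rcases idem_of_indec h (fun i => (e i).map σ.symm) (fun a => by
      have h1 := congrArg (fun m => m.map σ.symm) (he a)
      simp only [Matrix.map_mul] at h1
      have h2 : ((sact σ x) a).map σ.symm = x a := by
        ext r s; simp [sact]
      rwa [h2] at h1) (fun i => by
      rw [← Matrix.map_mul, hi]) with h | h
  · left
    intro i
    apply Matrix.map_injective inj
    refine (h i).trans ?_
    simp
  · right
    intro i
    apply Matrix.map_injective inj
    refine (h i).trans ?_
    simp

theorem mem_range_of_pow {k : Type} [Field k] [Fintype k] [Algebra k K] {z : K}
    (hz : z ^ Fintype.card k = z) : ∃ y, algebraMap k K y = z := by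
  classical
  by_contra hne
  push Not at hne
  let p : Polynomial K := Polynomial.X ^ Fintype.card k - Polynomial.X
  have hp : p ≠ 0 := FiniteField.X_pow_card_sub_X_ne_zero K Fintype.one_lt_card
  have hdeg : p.natDegree = Fintype.card k :=
    FiniteField.X_pow_card_sub_X_natDegree_eq K Fintype.one_lt_card
  let S : Finset K := insert z (Finset.univ.image (algebraMap k K))
  have hS : S.card = Fintype.card k + 1 := by
    rw [Finset.card_insert_of_notMem, Finset.card_image_of_injective _ (algebraMap k K).injective,
      Finset.card_univ]
    simpa using hne
  have hle : S.val ≤ p.roots := by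
    rw [Multiset.le_iff_subset S.nodup]
    intro w hw
    rw [Polynomial.mem_roots hp]
    have hw' : w ∈ S := hw
    simp only [S, Finset.mem_insert, Finset.mem_image, Finset.mem_univ, true_and] at hw'
    rcases hw' with rfl | ⟨y, rfl⟩
    · simp [p, Polynomial.IsRoot, hz]
    · simp only [p, Polynomial.IsRoot, Polynomial.eval_sub, Polynomial.eval_pow, Polynomial.eval_X]
      rw [← map_pow, FiniteField.pow_card, sub_self]
  have := Multiset.card_le_card hle
  have h2 := p.card_roots'
  change S.card ≤ _ at this
  omega

theorem frob_mod {k : Type} [Field k] [Fintype k] [Fintype K] [Algebra k K] (r : ℕ)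
    (hr : r.Prime) (hK : Fintype.card K = Fintype.card k ^ r) (hd : ∃ i, 0 < d i)
    (hs : ∀ x : MRep Q k d, MIndec x → Scal x) :
    Nat.card {x : MRep Q K d // MIndec x} ≡ Nat.card {x : MRep Q k d // MIndec x} [MOD r] := by
  classical
  have : Fact r.Prime := ⟨hr⟩
  have : Finite (MRep Q K d) := inferInstanceAs (Finite (∀ a, Matrix _ _ K))
  have : Fintype {x : MRep Q K d // MIndec x} := Fintype.ofFinite _
  let σ : K ≃+* K := (FiniteField.frobeniusAlgEquivOfAlgebraic k K).toRingEquiv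
  have hσ : ∀ z, σ z = z ^ Fintype.card k := fun z => rfl
  let f : Function.End {x : MRep Q K d // MIndec x} := fun x => ⟨sact σ x.1, indec_sact σ x.2⟩
  have hit : ∀ (n : ℕ) (x : {x : MRep Q K d // MIndec x}) a i j,
      ((f ^ n) x).1 a i j = (x.1 a i j) ^ (Fintype.card k ^ n) := by
    intro n
    induction n with
    | zero => intro x a i j; rw [pow_zero, pow_zero, pow_one]; rfl
    | succ n ih =>
      intro x a i j
      rw [pow_succ']
      change σ (((f ^ n) x).1 a i j) = _
      rw [hσ, ih, ← pow_mul, pow_succ]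
  have hf : f ^ r ^ 1 = 1 := by
    funext x
    apply Subtype.ext
    funext a
    ext i j
    rw [pow_one, hit, ← hK, FiniteField.pow_card]
    rfl
  have h1 := Equiv.Perm.card_fixedPoints_modEq hf
  rw [Nat.card_eq_fintype_card]
  refine h1.trans ?_
  rw [← Nat.card_eq_fintype_card]
  let Ψ : {x : MRep Q k d // MIndec x} → Function.fixedPoints f := fun y =>
    ⟨⟨mapRep K y.1, indec_of_scal hd (scal_map hd (hs _ y.2) K)⟩, by
      apply Subtype.ext
      funext a
      ext i j
      change σ (algebraMap k K (y.1 a i j)) = algebraMap k K (y.1 a i j)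
      rw [hσ, ← map_pow, FiniteField.pow_card]⟩
  have hΨ : Function.Bijective Ψ := by
    constructor
    · intro y y' h
      apply Subtype.ext
      funext a
      ext i j
      have h2 : mapRep K y.1 = mapRep K y'.1 := congrArg (fun t => t.1.1) h
      have h3 := congr_fun (congr_fun (congr_fun h2 a) i) j
      exact (algebraMap k K).injective h3
    · rintro ⟨x, hx⟩
      have h2 : sact σ x.1 = x.1 := congrArg Subtype.val hx
      have h3 : ∀ a i j, ∃ y, algebraMap k K y = x.1 a i j := by
        intro a i j
        apply mem_range_of_pow
        exact congr_fun (congr_fun (congr_fun h2 a) i) j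
      choose y hy using h3
      have h4 : mapRep K (fun a => Matrix.of (y a) : MRep Q k d) = x.1 := by
        funext a; ext i j; exact hy a i j
      refine ⟨⟨fun a => Matrix.of (y a), indec_of_map K (by rw [h4]; exact x.2)⟩, ?_⟩
      apply Subtype.ext
      apply Subtype.ext
      exact h4
  rw [Nat.card_congr (Equiv.ofBijective Ψ hΨ)]

end Frob
end Kac

namespace Kac
open Module

section Dec
variable {Q : FinQuiver} {K : Type} [Field K] {d : Q.V → ℕ}

/-- representations isomorphic to a direct sum of type β, γ -/
def Split (β γ : Q.V → ℕ) (x : MRep Q K d) : Prop :=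
  ∃ (e : ∀ i, ((Fin (β i) → K) × (Fin (γ i) → K)) ≃ₗ[K] (Fin (d i) → K))
    (y : MRep Q K β) (z : MRep Q K γ),
    ∀ a u v, (x a).mulVec (e _ (u, v)) = e _ ((y a).mulVec u, (z a).mulVec v)

theorem exists_split {x : MRep Q K d} (hd : ∃ i, 0 < d i) (hx : ¬ MIndec x) :
    ∃ β γ : Q.V → ℕ, (∀ i, β i + γ i = d i) ∧ β ≠ 0 ∧ γ ≠ 0 ∧ Split β γ x := by
  have h : ∃ U W : ∀ i, Submodule K (Fin (d i) → K), MSub x U ∧ MSub x W ∧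
      (∀ i, IsCompl (U i) (W i)) ∧ ¬ (∀ i, U i = ⊥) ∧ ¬ (∀ i, W i = ⊥) := by
    by_contra hc
    push Not at hc
    apply hx
    refine ⟨hd, fun U W hU hW hUW => ?_⟩
    by_contra h2
    rw [not_or] at h2
    exact h2.2 (hc U W hU hW hUW (by simpa using h2.1))
  obtain ⟨U, W, hU, hW, hUW, hU0, hW0⟩ := h
  let bU : ∀ i, U i ≃ₗ[K] (Fin (finrank K (U i)) → K) := fun i => (finBasis K (U i)).equivFun
  let bW : ∀ i, W i ≃ₗ[K] (Fin (finrank K (W i)) → K) := fun i => (finBasis K (W i)).equivFun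
  refine ⟨fun i => finrank K (U i), fun i => finrank K (W i), fun i => ?_, ?_, ?_, ?_⟩
  · have := Submodule.finrank_add_eq_of_isCompl (hUW i)
    simpa using this
  · intro h; apply hU0; intro i
    exact Submodule.finrank_eq_zero.1 (congr_fun h i)
  · intro h; apply hW0; intro i
    exact Submodule.finrank_eq_zero.1 (congr_fun h i)
  · refine ⟨fun i => ((bU i).symm.prodCongr (bW i).symm).trans
      (Submodule.prodEquivOfIsCompl _ _ (hUW i)), fun a => LinearMap.toMatrix'
        ((bU _).toLinearMap ∘ₗ ((x a).mulVecLin.restrict (hU a)) ∘ₗ (bU _).symm.toLinearMap),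
      fun a => LinearMap.toMatrix'
        ((bW _).toLinearMap ∘ₗ ((x a).mulVecLin.restrict (hW a)) ∘ₗ (bW _).symm.toLinearMap), ?_⟩
    intro a u v
    simp only [LinearMap.toMatrix'_mulVec]
    simp [Matrix.mulVec_add]
    rfl

theorem card_GLprod (d : Q.V → ℕ) :
    Nat.card (∀ i, (Fin (d i) → K) ≃ₗ[K] (Fin (d i) → K)) = Nat.card (∀ i, GL (Fin (d i)) K) := by
  apply Nat.card_congr
  refine Equiv.piCongrRight fun i => ?_
  exact ((LinearMap.GeneralLinearGroup.generalLinearEquiv K _).symm.trans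
    Matrix.GeneralLinearGroup.toLin.symm).toEquiv

theorem card_split [Fintype K] (β γ : Q.V → ℕ) :
    Nat.card {x : MRep Q K d // Split β γ x} * (Nat.card (∀ i, GL (Fin (β i)) K) *
      Nat.card (∀ i, GL (Fin (γ i)) K)) ≤
    Nat.card (∀ i, GL (Fin (d i)) K) * (Nat.card (MRep Q K β) * Nat.card (MRep Q K γ)) := by
  classical
  by_cases hne : Nonempty {x : MRep Q K d // Split β γ x}
  swap
  · have : Nat.card {x : MRep Q K d // Split β γ x} = 0 := by
      rw [not_nonempty_iff] at hne
      exact Nat.card_of_isEmpty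
    rw [this, zero_mul]; exact Nat.zero_le _
  obtain ⟨⟨x0, e0, -⟩⟩ := hne
  rw [← card_GLprod, ← card_GLprod, ← card_GLprod, ← Nat.card_prod, ← Nat.card_prod,
    ← Nat.card_prod, ← Nat.card_prod]
  have h : ∀ x : {x : MRep Q K d // Split β γ x}, Split β γ x.1 := fun x => x.2
  choose e y z hx using h
  have : ∀ d : Q.V → ℕ, Finite (MRep Q K d) := fun d => inferInstanceAs (Finite (∀ a, Matrix _ _ K))
  have hfin : ∀ i, Finite ((Fin (d i) → K) ≃ₗ[K] (Fin (d i) → K)) := fun i =>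
    Finite.of_injective (fun e => (e : (Fin (d i) → K) → (Fin (d i) → K))) DFunLike.coe_injective
  let Φ : {x : MRep Q K d // Split β γ x} × ((∀ i, (Fin (β i) → K) ≃ₗ[K] (Fin (β i) → K)) ×
      (∀ i, (Fin (γ i) → K) ≃ₗ[K] (Fin (γ i) → K))) →
      (∀ i, (Fin (d i) → K) ≃ₗ[K] (Fin (d i) → K)) × (MRep Q K β × MRep Q K γ) := fun p =>
    (fun i => (e0 i).symm.trans (((p.2.1 i).prodCongr (p.2.2 i)).trans (e p.1 i)),
      (fun a => LinearMap.toMatrix' ((p.2.1 _).symm.toLinearMap ∘ₗ (y p.1 a).mulVecLin ∘ₗ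
        (p.2.1 _).toLinearMap),
       fun a => LinearMap.toMatrix' ((p.2.2 _).symm.toLinearMap ∘ₗ (z p.1 a).mulVecLin ∘ₗ
        (p.2.2 _).toLinearMap)))
  refine Nat.card_le_card_of_injective Φ ?_
  rintro ⟨x, h1, h2⟩ ⟨x', h1', h2'⟩ heq
  have q1 := congrArg (fun t => t.1) heq
  have q2 := congrArg (fun t => t.2.1) heq
  have q3 := congrArg (fun t => t.2.2) heq
  simp only [Φ] at q1 q2 q3
  have E : ∀ i u v, e x i (h1 i u, h2 i v) = e x' i (h1' i u, h2' i v) := by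
    intro i u v
    have := LinearEquiv.congr_fun (congr_fun q1 i) (e0 i (u, v))
    simpa using this
  have Y : ∀ a u, (h1 _).symm ((y x a).mulVec (h1 _ u)) = (h1' _).symm ((y x' a).mulVec (h1' _ u)) := by
    intro a u
    have := congr_fun q2 a
    have := LinearMap.congr_fun (LinearMap.toMatrix'.injective this) u
    simpa using this
  have Z : ∀ a u, (h2 _).symm ((z x a).mulVec (h2 _ u)) = (h2' _).symm ((z x' a).mulVec (h2' _ u)) := by
    intro a u
    have := congr_fun q3 a
    have := LinearMap.congr_fun (LinearMap.toMatrix'.injective this) u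
    simpa using this
  have hxx : x = x' := by
    apply Subtype.ext
    funext a
    apply Matrix.ext_of_mulVec_single
    intro j
    generalize (Pi.single j 1 : Fin (d (Q.src a)) → K) = w
    obtain ⟨⟨u, v⟩, rfl⟩ := ((h1 (Q.src a)).prodCongr (h2 (Q.src a)) |>.trans (e x (Q.src a))).surjective w
    change (x.1 a).mulVec (e x _ (h1 _ u, h2 _ v)) = (x'.1 a).mulVec (e x _ (h1 _ u, h2 _ v))
    rw [hx x, E, hx x']
    have a1 : (y x a).mulVec (h1 _ u) = h1 _ ((h1 _).symm ((y x a).mulVec (h1 _ u))) := by simp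
    have a2 : (z x a).mulVec (h2 _ v) = h2 _ ((h2 _).symm ((z x a).mulVec (h2 _ v))) := by simp
    rw [a1, a2, E, Y, Z]
    simp
  subst hxx
  have hh : h1 = h1' ∧ h2 = h2' := by
    constructor
    · funext i
      ext1 u
      have := E i u 0
      have := (e x i).injective this
      simpa using this
    · funext i
      ext1 v
      have := E i 0 v
      have := (e x i).injective this
      simpa using this
  rw [hh.1, hh.2]

end Dec
end Kac

namespace Kac
open Module

/-- `∏_{j=1}^n (1 - u^j)` -/
noncomputable def PP (n : ℕ) (u : ℝ) : ℝ := ∏ j ∈ Finset.range n, (1 - u ^ (j + 1))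

theorem PP_ge (n : ℕ) {u : ℝ} (h0 : 0 ≤ u) (h1 : u ≤ 1 / 2) : (1 / 2 : ℝ) ^ n ≤ PP n u := by
  unfold PP
  have : (1 / 2 : ℝ) ^ n = ∏ j ∈ Finset.range n, (1 / 2 : ℝ) := by simp
  rw [this]
  apply Finset.prod_le_prod
  · intros; norm_num
  · intro j _
    have : u ^ (j + 1) ≤ u := by
      rw [pow_succ]
      have := pow_le_one₀ (n := j) h0 (by linarith)
      nlinarith
    linarith

theorem prod_deriv {ι : Type} (s : Finset ι) (f : ι → ℝ → ℝ) (c : ι → ℝ)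
    (h0 : ∀ i ∈ s, f i 0 = 1) (h : ∀ i ∈ s, HasDerivAt (f i) (c i) 0) :
    HasDerivAt (fun u => ∏ i ∈ s, f i u) (∑ i ∈ s, c i) 0 := by
  classical
  induction s using Finset.induction_on with
  | empty => simpa using hasDerivAt_const (0 : ℝ) (1 : ℝ)
  | insert a s ha ih =>
    simp only [Finset.prod_insert ha, Finset.sum_insert ha]
    have h1 := (h a (by simp)).mul (ih (fun i hi => h0 i (by simp [hi])) (fun i hi => h i (by simp [hi])))
    have e1 : ∏ i ∈ s, f i 0 = 1 := Finset.prod_eq_one fun i hi => h0 i (by simp [hi])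
    rw [e1, h0 a (by simp), mul_one, one_mul] at h1
    exact h1

theorem PP_zero (n : ℕ) : PP n 0 = 1 := by simp [PP]

theorem PP_deriv {n : ℕ} (hn : 0 < n) : HasDerivAt (PP n) (-1) 0 := by
  have := prod_deriv (Finset.range n) (fun j u => 1 - u ^ (j + 1))
    (fun j => if j = 0 then -1 else 0) (by simp) (by
      intro j _
      have := ((hasDerivAt_pow (j + 1) (0 : ℝ)).const_sub 1)
      refine this.congr_deriv ?_
      rcases j with _ | j <;> simp)
  have e : ∑ j ∈ Finset.range n, (if j = 0 then (-1 : ℝ) else 0) = -1 := by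
    rw [Finset.sum_ite_eq']
    simp [hn]
  rw [e] at this
  exact this

section Num
variable {Q : FinQuiver} {K : Type} [Field K] [Fintype K]

/-- `∏_i ∏_{j=1}^{d_i} (1 - u^j)` -/
noncomputable def DD {V : Type} [Fintype V] (d : V → ℕ) (u : ℝ) : ℝ := ∏ i, PP (d i) u

theorem DD_ge {V : Type} [Fintype V] (d : V → ℕ) {u : ℝ} (h0 : 0 ≤ u) (h1 : u ≤ 1 / 2) :
    (1 / 2 : ℝ) ^ (∑ i, d i) ≤ DD d u := by
  rw [← Finset.prod_pow_eq_pow_sum]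
  apply Finset.prod_le_prod
  · intros; positivity
  · intro i _; exact PP_ge _ h0 h1

theorem DD_lim {V : Type} [Fintype V] (d : V → ℕ) (hd : ∀ i, 0 < d i) :
    HasDerivAt (fun u : ℝ => (1 - u) / DD d u) ((Fintype.card V : ℝ) - 1) 0 := by
  have h1 : HasDerivAt (DD d) (∑ i : V, (-1)) 0 :=
    prod_deriv Finset.univ (fun i u => PP (d i) u) (fun _ => -1) (fun i _ => PP_zero _)
      (fun i _ => PP_deriv (hd i))
  have h0 : DD d 0 = 1 := by simp [DD, PP_zero]
  have h2 : HasDerivAt (fun u : ℝ => 1 - u) (-1) 0 := (hasDerivAt_id (0 : ℝ)).const_sub 1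
  have h3 := h2.div h1 (by rw [h0]; norm_num)
  refine h3.congr_deriv ?_
  rw [h0]
  simp
  ring

theorem DD_eventually {V : Type} [Fintype V] (d : V → ℕ) (hd : ∀ i, 0 < d i) :
    ∃ ε > 0, ∀ u : ℝ, 0 < u → u < ε →
      |u⁻¹ * ((1 - u) / DD d u) - u⁻¹ - ((Fintype.card V : ℝ) - 1)| < 1 / 2 := by
  have h := (hasDerivAt_iff_tendsto_slope.1 (DD_lim d hd))
  rw [Metric.tendsto_nhdsWithin_nhds] at h
  obtain ⟨ε, hε, h⟩ := h (1 / 2) (by norm_num)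
  refine ⟨ε, hε, fun u hu hue => ?_⟩
  have := h (x := u) (by simpa using hu.ne') (by rw [Real.dist_eq, sub_zero, abs_of_pos hu]; exact hue)
  rw [Real.dist_eq, slope_def_field] at this
  have h0 : DD d 0 = 1 := by simp [DD, PP_zero]
  rw [h0] at this
  have e : u⁻¹ * ((1 - u) / DD d u) - u⁻¹ - ((Fintype.card V : ℝ) - 1) =
      ((1 - u) / DD d u - (1 - 0) / 1) / (u - 0) - ((Fintype.card V : ℝ) - 1) := by
    rw [sub_zero, sub_zero, div_one, div_eq_inv_mul _ u, mul_sub, mul_one]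
  rw [e]; exact this

theorem card_MRep (d : Q.V → ℕ) :
    Nat.card (MRep Q K d) = Fintype.card K ^ (∑ a, d (Q.src a) * d (Q.tgt a)) := by
  change Nat.card (∀ a : Q.A, Matrix (Fin (d (Q.tgt a))) (Fin (d (Q.src a))) K) = _
  rw [Nat.card_pi, ← Finset.prod_pow_eq_pow_sum]
  apply Finset.prod_congr rfl
  intro a _
  change Nat.card (Fin (d (Q.tgt a)) → Fin (d (Q.src a)) → K) = _
  rw [Nat.card_eq_fintype_card]
  simp [pow_mul]

theorem card_GL_real (n : ℕ) : (Nat.card (GL (Fin n) K) : ℝ) =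
    (Fintype.card K : ℝ) ^ (n * n) * PP n (Fintype.card K : ℝ)⁻¹ := by
  have hq : (1 : ℝ) < Fintype.card K := by exact_mod_cast Fintype.one_lt_card
  rw [Matrix.card_GL_field]
  rw [← Finset.prod_range (f := fun i => (Fintype.card K ^ n - Fintype.card K ^ i)), PP,
    ← Finset.prod_range_reflect (fun j => (1 - ((Fintype.card K : ℝ)⁻¹) ^ (j + 1)))]
  push_cast
  have e : (Fintype.card K : ℝ) ^ (n * n) = ∏ _j ∈ Finset.range n, (Fintype.card K : ℝ) ^ n := by
    rw [Finset.prod_const, Finset.card_range, pow_mul]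
  rw [e, ← Finset.prod_mul_distrib]
  apply Finset.prod_congr rfl
  intro i hi
  rw [Finset.mem_range] at hi
  rw [Nat.cast_sub (Nat.pow_le_pow_right Fintype.card_pos hi.le)]
  push_cast
  rw [mul_sub, mul_one]
  congr 1
  have : n - 1 - i + 1 = n - i := by omega
  rw [this, inv_pow, pow_sub₀ _ (by positivity) hi.le]
  field_simp

theorem card_G_real (d : Q.V → ℕ) : (Nat.card (∀ i, GL (Fin (d i)) K) : ℝ) =
    (Fintype.card K : ℝ) ^ (∑ i, d i * d i) * DD d (Fintype.card K : ℝ)⁻¹ := by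
  rw [Nat.card_pi, Nat.cast_prod]
  simp only [card_GL_real]
  rw [Finset.prod_mul_distrib, Finset.prod_pow_eq_pow_sum, DD]

end Num
end Kac

namespace Kac
open Module

section Mass
variable (Q : AffineQuiver) {K : Type} [Field K] [Fintype K]

theorem mass_le {β : Q.V → ℕ} (hle : ∀ i, (β i : ℤ) ≤ Q.δ i) (h0 : β ≠ 0)
    (hd : (fun i => (β i : ℤ)) ≠ Q.δ) :
    (Nat.card (MRep Q.toFinQuiver K β) : ℝ) ≤ (Fintype.card K : ℝ)⁻¹ * 2 ^ (∑ i, β i) *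
      Nat.card (∀ i, GL (Fin (β i)) K) := by
  have hq : (2 : ℝ) ≤ Fintype.card K := by exact_mod_cast Fintype.one_lt_card
  have h1 := tits_pos Q (x := fun i => (β i : ℤ)) (fun i => by positivity) hle (by
    intro h; apply h0; funext i; have := congr_fun h i; simpa using this) hd
  have h2 : (∑ a, β (Q.src a) * β (Q.tgt a)) + 1 ≤ ∑ i, β i * β i := by
    unfold FinQuiver.titsForm FinQuiver.eulerForm at h1
    zify
    linarith
  rw [card_MRep, card_G_real]
  have hD := DD_ge β (u := (Fintype.card K : ℝ)⁻¹) (by positivity) (by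
    rw [one_div]; exact inv_anti₀ (by norm_num) hq)
  have h3 : (Fintype.card K : ℝ) ^ ((∑ a, β (Q.src a) * β (Q.tgt a)) + 1) ≤
      (Fintype.card K : ℝ) ^ (∑ i, β i * β i) := pow_le_pow_right₀ (by linarith) h2
  push_cast
  have h4 : (1 : ℝ) ≤ 2 ^ (∑ i, β i) * DD β (Fintype.card K : ℝ)⁻¹ := by
    calc (1 : ℝ) = 2 ^ (∑ i, β i) * (1 / 2) ^ (∑ i, β i) := by rw [← mul_pow]; norm_num
      _ ≤ _ := by gcongr
  rw [pow_succ] at h3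
  have hpos : (0 : ℝ) < Fintype.card K := by linarith
  calc (Fintype.card K : ℝ) ^ (∑ a, β (Q.src a) * β (Q.tgt a))
      = (Fintype.card K : ℝ)⁻¹ * ((Fintype.card K : ℝ) ^ (∑ a, β (Q.src a) * β (Q.tgt a)) * Fintype.card K) := by
        field_simp
    _ ≤ (Fintype.card K : ℝ)⁻¹ * (Fintype.card K : ℝ) ^ (∑ i, β i * β i) := by gcongr
    _ = (Fintype.card K : ℝ)⁻¹ * (Fintype.card K : ℝ) ^ (∑ i, β i * β i) * 1 := by ring
    _ ≤ (Fintype.card K : ℝ)⁻¹ * (Fintype.card K : ℝ) ^ (∑ i, β i * β i) *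
        (2 ^ (∑ i, β i) * DD β (Fintype.card K : ℝ)⁻¹) := by gcongr
    _ = _ := by ring

theorem split_le {d β γ : Q.V → ℕ} (hd : ∀ i, (d i : ℤ) = Q.δ i) (hs : ∀ i, β i + γ i = d i)
    (hβ : β ≠ 0) (hγ : γ ≠ 0) :
    (Nat.card {x : MRep Q.toFinQuiver K d // Split β γ x} : ℝ) ≤
      Nat.card (∀ i, GL (Fin (d i)) K) * ((Fintype.card K : ℝ)⁻¹ ^ 2 * 2 ^ (∑ i, d i)) := by
  have h1 := card_split (Q := Q.toFinQuiver) (K := K) (d := d) β γ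
  have m1 := mass_le Q (K := K) (β := β) (fun i => by rw [← hd, ← hs]; push_cast; omega) hβ (by
    intro h; apply hγ; funext i
    have := congr_fun h i
    rw [← hd, ← hs] at this
    simp at this; simpa using this)
  have m2 := mass_le Q (K := K) (β := γ) (fun i => by rw [← hd, ← hs]; push_cast; omega) hγ (by
    intro h; apply hβ; funext i
    have := congr_fun h i
    rw [← hd, ← hs] at this
    simp at this; simpa using this)
  have g1 : (0 : ℝ) < Nat.card (∀ i, GL (Fin (β i)) K) := by exact_mod_cast Nat.card_pos
  have g2 : (0 : ℝ) < Nat.card (∀ i, GL (Fin (γ i)) K) := by exact_mod_cast Nat.card_pos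
  have h1' : (Nat.card {x : MRep Q.toFinQuiver K d // Split β γ x} : ℝ) *
      (Nat.card (∀ i, GL (Fin (β i)) K) * Nat.card (∀ i, GL (Fin (γ i)) K)) ≤
      Nat.card (∀ i, GL (Fin (d i)) K) *
        (Nat.card (MRep Q.toFinQuiver K β) * Nat.card (MRep Q.toFinQuiver K γ)) := by
    exact_mod_cast h1
  have hsum : ∑ i, d i = ∑ i, β i + ∑ i, γ i := by
    rw [← Finset.sum_add_distrib]; exact Finset.sum_congr rfl fun i _ => (hs i).symm
  refine le_of_mul_le_mul_right (h1'.trans ?_) (mul_pos g1 g2)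
  rw [hsum, pow_add]
  calc _ ≤ (Nat.card (∀ i, GL (Fin (d i)) K) : ℝ) *
        (((Fintype.card K : ℝ)⁻¹ * 2 ^ (∑ i, β i) * Nat.card (∀ i, GL (Fin (β i)) K)) *
        ((Fintype.card K : ℝ)⁻¹ * 2 ^ (∑ i, γ i) * Nat.card (∀ i, GL (Fin (γ i)) K))) := by gcongr
    _ = _ := by ring

theorem dec_le {d : Q.V → ℕ} (hd : ∀ i, (d i : ℤ) = Q.δ i) (hd0 : ∃ i, 0 < d i) :
    (Nat.card {x : MRep Q.toFinQuiver K d // ¬ MIndec x} : ℝ) ≤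
      (Fintype.card (∀ i, Fin (d i + 1)) : ℝ) * (Nat.card (∀ i, GL (Fin (d i)) K) *
        ((Fintype.card K : ℝ)⁻¹ ^ 2 * 2 ^ (∑ i, d i))) := by
  classical
  have hfin : Finite (MRep Q.toFinQuiver K d) := inferInstanceAs (Finite (∀ a, Matrix _ _ K))
  let I := {b : ∀ i, Fin (d i + 1) // (fun i => ((b i : ℕ))) ≠ 0 ∧ (fun i => (d i - b i : ℕ)) ≠ 0}
  let S : I → Type := fun b => {x : MRep Q.toFinQuiver K d //
    Split (fun i => ((b.1 i : ℕ))) (fun i => d i - b.1 i) x}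
  have hex : ∀ x : {x : MRep Q.toFinQuiver K d // ¬ MIndec x}, ∃ b : I,
      Split (fun i => ((b.1 i : ℕ))) (fun i => d i - b.1 i) x.1 := by
    rintro ⟨x, hx⟩
    obtain ⟨β, γ, hs, hβ, hγ, hsp⟩ := exists_split hd0 hx
    have hγ' : γ = fun i => d i - β i := by funext i; have := hs i; omega
    subst hγ'
    exact ⟨⟨fun i => ⟨β i, by have := hs i; omega⟩, hβ, hγ⟩, hsp⟩
  choose b hb using hex
  let Φ : {x : MRep Q.toFinQuiver K d // ¬ MIndec x} → Σ b : I, S b := fun x => ⟨b x, ⟨x.1, hb x⟩⟩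
  have hS : ∀ b, Finite (S b) := fun b => inferInstanceAs (Finite {x // _})
  have hΦ : Function.Injective Φ := by
    intro x y h
    apply Subtype.ext
    exact congrArg (fun t : Σ b : I, S b => t.2.1) h
  have h1 := Nat.card_le_card_of_injective Φ hΦ
  rw [Nat.card_sigma] at h1
  have h2 : (Nat.card {x : MRep Q.toFinQuiver K d // ¬ MIndec x} : ℝ) ≤ ∑ b : I, (Nat.card (S b) : ℝ) := by
    exact_mod_cast h1
  refine h2.trans ?_
  calc ∑ b : I, (Nat.card (S b) : ℝ) ≤ ∑ _b : I, ((Nat.card (∀ i, GL (Fin (d i)) K) : ℝ) *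
        ((Fintype.card K : ℝ)⁻¹ ^ 2 * 2 ^ (∑ i, d i))) := by
        apply Finset.sum_le_sum
        intro b _
        exact split_le Q hd (fun i => by have := (b.1 i).2; omega) b.2.1 b.2.2
    _ = (Fintype.card I : ℝ) * ((Nat.card (∀ i, GL (Fin (d i)) K) : ℝ) *
        ((Fintype.card K : ℝ)⁻¹ ^ 2 * 2 ^ (∑ i, d i))) := by
        rw [Finset.sum_const, nsmul_eq_mul, Finset.card_univ]
    _ ≤ _ := by
        gcongr
        exact Fintype.card_subtype_le _

/-- the count for large fields -/
theorem large {d : Q.V → ℕ} (hd : ∀ i, (d i : ℤ) = Q.δ i) : ∃ R : ℕ,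
    ∀ (K : Type) [Field K] [Fintype K], R ≤ Fintype.card K →
    Nat.card (Quot (fun x y : {x : MRep Q.toFinQuiver K d // MIndec x} => MIso x.1 y.1)) + 1 =
      Fintype.card K + Fintype.card Q.V := by
  have hpos : ∀ i, 0 < d i := fun i => by have := Q.delta_pos i; rw [← hd] at this; exact_mod_cast this
  obtain ⟨i0⟩ := Q.connected.nonempty
  have hd0 : ∃ i, 0 < d i := ⟨i0, hpos i0⟩
  obtain ⟨ε, hε, hlim⟩ := DD_eventually d hpos
  let C : ℝ := (Fintype.card (∀ i, Fin (d i + 1)) : ℝ) * 2 ^ (∑ i, d i)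
  have hC : 0 ≤ C := by positivity
  obtain ⟨R, hR⟩ := exists_nat_gt (max (ε⁻¹) (2 * C))
  refine ⟨R, fun K _ _ hK => ?_⟩
  have hq : (2 : ℝ) ≤ Fintype.card K := by exact_mod_cast Fintype.one_lt_card
  have hRK : (R : ℝ) ≤ Fintype.card K := by exact_mod_cast hK
  have hdec := dec_le Q (K := K) hd hd0
  have hind := card_indec (Q := Q.toFinQuiver) (k := K) hd0
    (fun x hx => scal_of_indec Q (fun i => (hd i).le) x hx)
  have hfin : Finite (MRep Q.toFinQuiver K d) := inferInstanceAs (Finite (∀ a, Matrix _ _ K))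
  have htot : Nat.card {x : MRep Q.toFinQuiver K d // MIndec x} +
      Nat.card {x : MRep Q.toFinQuiver K d // ¬ MIndec x} = Nat.card (MRep Q.toFinQuiver K d) := by
    classical
    rw [← Nat.card_sum]
    exact Nat.card_congr (Equiv.sumCompl _)
  have hexp : ∑ a, d (Q.src a) * d (Q.tgt a) = ∑ i, d i * d i := by
    have h1 := tits_delta Q
    unfold FinQuiver.titsForm FinQuiver.eulerForm at h1
    simp only [← hd] at h1
    zify
    linarith
  have hM : (Nat.card (MRep Q.toFinQuiver K d) : ℝ) * DD d (Fintype.card K : ℝ)⁻¹ =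
      Nat.card (∀ i, GL (Fin (d i)) K) := by
    rw [card_MRep, card_G_real, hexp]; push_cast; rfl
  have hD := DD_ge d (u := (Fintype.card K : ℝ)⁻¹) (by positivity) (by
    rw [one_div]; exact inv_anti₀ (by norm_num) hq)
  have hD0 : 0 < DD d (Fintype.card K : ℝ)⁻¹ := lt_of_lt_of_le (by positivity) hD
  have hG : (0 : ℝ) < Nat.card (∀ i, GL (Fin (d i)) K) := by exact_mod_cast Nat.card_pos
  have hlim' := hlim (Fintype.card K : ℝ)⁻¹ (by positivity) (by
    rw [inv_lt_comm₀ (by positivity) hε]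
    exact (le_max_left _ _).trans_lt (hR.trans_le hRK))
  have hCq : 2 * C < Fintype.card K := (le_max_right _ _).trans_lt (hR.trans_le hRK)
  have hind' : (Nat.card {x : MRep Q.toFinQuiver K d // MIndec x} : ℝ) * (Fintype.card K - 1) =
      Nat.card (Quot (fun x y : {x : MRep Q.toFinQuiver K d // MIndec x} => MIso x.1 y.1)) *
        Nat.card (∀ i, GL (Fin (d i)) K) := by
    rw [← Nat.cast_mul, ← hind, Nat.cast_mul, Nat.cast_sub Fintype.card_pos, Nat.cast_one]
  have htot' : (Nat.card {x : MRep Q.toFinQuiver K d // MIndec x} : ℝ) +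
      Nat.card {x : MRep Q.toFinQuiver K d // ¬ MIndec x} = Nat.card (MRep Q.toFinQuiver K d) := by
    exact_mod_cast htot
  have hX0 : (0 : ℝ) ≤ Nat.card {x : MRep Q.toFinQuiver K d // ¬ MIndec x} := by positivity
  zify
  generalize (Nat.card (Quot (fun x y : {x : MRep Q.toFinQuiver K d // MIndec x} => MIso x.1 y.1))) = N at *
  generalize (Nat.card {x : MRep Q.toFinQuiver K d // ¬ MIndec x} : ℝ) = X at *
  generalize (Nat.card {x : MRep Q.toFinQuiver K d // MIndec x} : ℝ) = Y at *
  generalize (Nat.card (MRep Q.toFinQuiver K d) : ℝ) = M at *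
  generalize (Nat.card (∀ i, GL (Fin (d i)) K) : ℝ) = G at *
  generalize DD d (Fintype.card K : ℝ)⁻¹ = D at *
  have hXC : X ≤ G * (C * (Fintype.card K : ℝ)⁻¹ ^ 2) := by
    refine hdec.trans (le_of_eq ?_)
    simp only [C]; ring
  rw [inv_inv] at hlim'
  have key : |(N : ℝ) + 1 - (Fintype.card K + Fintype.card Q.V)| < 1 := by
    generalize (Fintype.card K : ℝ) = q at *
    have hq0 : 0 < q := by linarith
    have hN : (N : ℝ) = q * ((1 - q⁻¹) / D) - (q - 1) * X / G := by
      have e1 : q * ((1 - q⁻¹) / D) = (q - 1) * M / G := by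
        rw [← hM]
        have : M ≠ 0 := by rintro rfl; simp at hM; linarith
        field_simp
      rw [e1, ← htot', eq_sub_iff_add_eq]
      field_simp
      rw [← hind']; ring
    have hB : (q - 1) * X / G < 1 / 2 := by
      rw [div_lt_iff₀ hG]
      have : (q - 1) * X ≤ q * (G * (C * q⁻¹ ^ 2)) := by
        apply mul_le_mul (by linarith) hXC hX0 hq0.le
      have e2 : q * (G * (C * q⁻¹ ^ 2)) = G * (C * q⁻¹) := by field_simp
      have e3 : C * q⁻¹ < 1 / 2 := by
        rw [← div_eq_mul_inv, div_lt_iff₀ hq0]; linarith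
      nlinarith
    have hB0 : 0 ≤ (q - 1) * X / G := by
      apply div_nonneg (mul_nonneg (by linarith) hX0) hG.le
    rw [abs_lt] at hlim' ⊢
    constructor <;> linarith [hlim'.1, hlim'.2]
  have key2 : |(N : ℤ) + 1 - (Fintype.card K + Fintype.card Q.V)| < 1 := by exact_mod_cast key
  have := Int.abs_lt_one_iff.1 key2
  linarith

end Mass
end Kac

namespace Kac
open Module

theorem card_GL_mod {k K : Type} [Field k] [Fintype k] [Field K] [Fintype K] {r : ℕ}
    (hr : r.Prime) (hK : Fintype.card K = Fintype.card k ^ r) (n : ℕ) :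
    Nat.card (GL (Fin n) K) ≡ Nat.card (GL (Fin n) k) [MOD r] := by
  have : Fact r.Prime := ⟨hr⟩
  rw [← ZMod.natCast_eq_natCast_iff, Matrix.card_GL_field, Matrix.card_GL_field, Nat.cast_prod,
    Nat.cast_prod]
  apply Finset.prod_congr rfl
  intro i _
  rw [Nat.cast_sub (Nat.pow_le_pow_right Fintype.card_pos i.2.le),
    Nat.cast_sub (Nat.pow_le_pow_right Fintype.card_pos i.2.le), hK]
  push_cast
  rw [ZMod.pow_card]

theorem count (Q : AffineQuiver) (k : Type) [Field k] [Fintype k] {d : Q.V → ℕ}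
    (hd : ∀ i, (d i : ℤ) = Q.δ i) :
    Nat.card (Quot (fun x y : {x : MRep Q.toFinQuiver k d // MIndec x} => MIso x.1 y.1)) + 1 =
      Fintype.card k + Fintype.card Q.V := by
  have hpos : ∀ i, 0 < d i := fun i => by have := Q.delta_pos i; rw [← hd] at this; exact_mod_cast this
  obtain ⟨i0⟩ := Q.connected.nonempty
  have hd0 : ∃ i, 0 < d i := ⟨i0, hpos i0⟩
  obtain ⟨R, hR⟩ := large Q hd
  let N := Nat.card (Quot (fun x y : {x : MRep Q.toFinQuiver k d // MIndec x} => MIso x.1 y.1))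
  let G := Nat.card (∀ i, GL (Fin (d i)) k)
  have hG : 0 < G := Nat.card_pos
  obtain ⟨r, hrle, hr⟩ := Nat.exists_infinite_primes (R + G + N + Fintype.card k + Fintype.card Q.V + 2)
  have hrF : Fact r.Prime := ⟨hr⟩
  have : NeZero r := ⟨hr.ne_zero⟩
  obtain ⟨p, hp⟩ := CharP.exists k
  have : Fact p.Prime := ⟨CharP.char_is_prime k p⟩
  let K := FiniteField.Extension k p r
  have : Finite K := Module.finite_of_finite k
  let _ : Fintype K := Fintype.ofFinite K
  have hK : Fintype.card K = Fintype.card k ^ r := by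
    rw [← Nat.card_eq_fintype_card, ← Nat.card_eq_fintype_card]
    exact FiniteField.natCard_extension k p r
  have hbig : R ≤ Fintype.card K := by
    rw [hK]
    have : r < Fintype.card k ^ r := Nat.lt_pow_self Fintype.one_lt_card
    omega
  have h1 := hR K hbig
  have h2 := frob_mod (Q := Q.toFinQuiver) (K := K) (d := d) r hr hK hd0
    (fun x hx => scal_of_indec Q (fun i => (hd i).le) x hx)
  have h3 := card_indec (Q := Q.toFinQuiver) (k := K) hd0
    (fun x hx => scal_of_indec Q (fun i => (hd i).le) x hx)
  have h4 := card_indec (Q := Q.toFinQuiver) (k := k) hd0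
    (fun x hx => scal_of_indec Q (fun i => (hd i).le) x hx)
  have h5 : Nat.card (∀ i, GL (Fin (d i)) K) ≡ Nat.card (∀ i, GL (Fin (d i)) k) [MOD r] := by
    rw [← ZMod.natCast_eq_natCast_iff, Nat.card_pi, Nat.card_pi, Nat.cast_prod, Nat.cast_prod]
    apply Finset.prod_congr rfl
    intro i _
    exact (ZMod.natCast_eq_natCast_iff _ _ _).2 (card_GL_mod hr hK (d i))
  rw [← ZMod.natCast_eq_natCast_iff] at h2 h5
  have hKz : ((Fintype.card K : ℕ) : ZMod r) = (Fintype.card k : ZMod r) := by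
    rw [hK]; push_cast; rw [ZMod.pow_card]
  have h3' := congrArg (Nat.cast : ℕ → ZMod r) h3
  have h4' := congrArg (Nat.cast : ℕ → ZMod r) h4
  have h1' := congrArg (Nat.cast : ℕ → ZMod r) h1
  rw [Nat.cast_mul, Nat.cast_mul, Nat.cast_sub Fintype.card_pos] at h3' h4'
  rw [h2, h5, hKz, h4'] at h3'
  have hG0 : ((Nat.card (∀ i, GL (Fin (d i)) k) : ℕ) : ZMod r) ≠ 0 := by
    intro h
    rw [ZMod.natCast_eq_zero_iff] at h
    have := Nat.le_of_dvd hG h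
    change r ≤ G at this
    omega
  have h6 := mul_right_cancel₀ hG0 h3'
  rw [Nat.cast_add, Nat.cast_add, ← h6, hKz, ← Nat.cast_add, ← Nat.cast_add,
    ZMod.natCast_eq_natCast_iff] at h1'
  refine Nat.ModEq.eq_of_lt_of_lt h1' ?_ ?_
  · change N + 1 < r
    omega
  · omega

end Kac

/-- Over a finite field `F_q`, the number of isomorphism classes of indecomposable
representations of an affine quiver with `n + 1` vertices in dimension vector `δ`
(the minimal positive imaginary root) is exactly `q + n`, and every indecomposable
representation of dimension vector `δ` is absolutely indecomposable.  In particular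
`a_δ(q) = q + dim g_δ`, confirming Kac's conjecture in dimension `δ`. -/
theorem kac_conjecture_dimension_delta
    (Q : AffineQuiver) (k : Type) [Field k] [Fintype k] :
    Nat.card (Quot (fun x y : {x : MRep Q.toFinQuiver k (fun i => (Q.δ i).toNat) // MIndec x} =>
        MIso x.1 y.1))
      = Fintype.card k + (Fintype.card Q.V - 1) ∧
    ∀ x : MRep Q.toFinQuiver k (fun i => (Q.δ i).toNat), MIndec x → MAbsIndec x := by
  have hd : ∀ i, (((Q.δ i).toNat : ℕ) : ℤ) = Q.δ i := fun i =>
    Int.toNat_of_nonneg (Q.delta_pos i).le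
  have hd0 : ∃ i, 0 < (Q.δ i).toNat := by
    obtain ⟨i0⟩ := Q.connected.nonempty
    exact ⟨i0, by have := Q.delta_pos i0; omega⟩
  refine ⟨?_, fun x hx => ⟨hx, ?_⟩⟩
  · have h := Kac.count Q k (d := fun i => (Q.δ i).toNat) hd
    have : 0 < Fintype.card Q.V := Fintype.card_pos_iff.2 Q.connected.nonempty
    omega
  · exact Kac.indec_of_scal hd0 (Kac.scal_map hd0
      (Kac.scal_of_indec Q (fun i => (hd i).le) x hx) (AlgebraicClosure k))
end
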